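/- New entropic uncertainty relation: Let ρ_ABC be a density matrix on ℂ^(A×B×C), let {M_x}_{x∈X} and {N_y}_{y∈Y} be POVMs on the A-system, and let c := max_{x,y} ‖ M_x^{1/2} N_y^{1/2} ‖ where ‖·‖ is the operator norm. Define the classical-quantum post-measurement states ρ_XB on ℂ^(X×B) by ρ_XB (x,b)(x',b') = (if x = x' then (tr_{AC}((M_x ⊗ 1_{BC}) ρ_ABC)) b b' else 0), and ρ_YC on ℂ^(Y×C) analogously with N_y and tr_{AB}. Then for all α ∈ (0,2), β ∈ (1/2,∞) with α·β = 1 and α ≠ 1: H_α^↑(X|B)_ρ + H̃_β^↓(Y|C)_ρ ≥ log(1/c), where H_α^↑(X|B)_ρ is the supremum over density matrices σ_B of −D_α(ρ_XB ‖ 1_X ⊗ σ_B) (for α > 1 over σ_B whose kernel is contained in that of tr_X ρ_XB) and H̃_β^↓(Y|C)_ρ := −D̃_β(ρ_YC ‖ 1_Y ⊗ ρ_C) with ρ_C = tr_Y ρ_YC. -/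

import Mathlib

open scoped Kronecker ComplexOrder
open Matrix

/-- Real power of a matrix via the functional calculus on the eigenvalues,
with the convention `0 ^ t = 0` (powers taken on the support). -/
noncomputable def matRpow {n : Type*} [Fintype n] [DecidableEq n]
    (A : Matrix n n ℂ) (t : ℝ) : Matrix n n ℂ :=
  if hA : A.IsHermitian then
    (hA.eigenvectorUnitary : Matrix n n ℂ) *
      Matrix.diagonal (fun i =>
        ((if hA.eigenvalues i = 0 then (0 : ℝ) else (hA.eigenvalues i) ^ t : ℝ) : ℂ)) *
      star (hA.eigenvectorUnitary : Matrix n n ℂ)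
  else 0

/-- Matrix logarithm on the support. -/
noncomputable def matLog {n : Type*} [Fintype n] [DecidableEq n]
    (A : Matrix n n ℂ) : Matrix n n ℂ :=
  if hA : A.IsHermitian then
    (hA.eigenvectorUnitary : Matrix n n ℂ) *
      Matrix.diagonal (fun i => ((Real.log (hA.eigenvalues i) : ℝ) : ℂ)) *
      star (hA.eigenvectorUnitary : Matrix n n ℂ)
  else 0

/-- Partial trace over the first tensor factor. -/
noncomputable def trFst {a b : Type*} [Fintype a] (M : Matrix (a × b) (a × b) ℂ) :
    Matrix b b ℂ :=
  Matrix.of fun j j' => ∑ i, M (i, j) (i, j')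

/-- Partial trace over the second tensor factor. -/
noncomputable def trSnd {a b : Type*} [Fintype b] (M : Matrix (a × b) (a × b) ℂ) :
    Matrix a a ℂ :=
  Matrix.of fun i i' => ∑ j, M (i, j) (i', j)

/-- Partial trace over the third factor of a tripartite system. -/
noncomputable def trThird {a b c : Type*} [Fintype c]
    (M : Matrix (a × b × c) (a × b × c) ℂ) : Matrix (a × b) (a × b) ℂ :=
  Matrix.of fun p p' => ∑ k, M (p.1, p.2, k) (p'.1, p'.2, k)

/-- Partial trace over the second factor of a tripartite system. -/
noncomputable def trSecond {a b c : Type*} [Fintype b]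
    (M : Matrix (a × b × c) (a × b × c) ℂ) : Matrix (a × c) (a × c) ℂ :=
  Matrix.of fun p p' => ∑ j, M (p.1, j, p.2) (p'.1, j, p'.2)

/-- Partial trace over the first two factors of a tripartite system. -/
noncomputable def trFstSnd {a b c : Type*} [Fintype a] [Fintype b]
    (M : Matrix (a × b × c) (a × b × c) ℂ) : Matrix c c ℂ :=
  Matrix.of fun k k' => ∑ i, ∑ j, M (i, j, k) (i, j, k')

/-- Partial trace over the first and third factors of a tripartite system. -/
noncomputable def trFstThird {a b c : Type*} [Fintype a] [Fintype c]
    (M : Matrix (a × b × c) (a × b × c) ℂ) : Matrix b b ℂ :=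
  Matrix.of fun j j' => ∑ i, ∑ k, M (i, j, k) (i, j', k)

/-- Quantum Rényi relative entropy `D_α(ρ‖σ)`. -/
noncomputable def renyiDiv {n : Type*} [Fintype n] [DecidableEq n]
    (α : ℝ) (ρ σ : Matrix n n ℂ) : ℝ :=
  (α - 1)⁻¹ * Real.log ((matRpow ρ α * matRpow σ (1 - α)).trace.re)

/-- Sandwiched quantum Rényi divergence `D̃_α(ρ‖σ)`. -/
noncomputable def sandwichedRenyiDiv {n : Type*} [Fintype n] [DecidableEq n]
    (α : ℝ) (ρ σ : Matrix n n ℂ) : ℝ :=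
  (α - 1)⁻¹ * Real.log
    ((matRpow (matRpow σ ((1 - α) / (2 * α)) * ρ * matRpow σ ((1 - α) / (2 * α))) α).trace.re)

/-- Quantum relative entropy `D(ρ‖σ)`. -/
noncomputable def relEntropy {n : Type*} [Fintype n] [DecidableEq n]
    (ρ σ : Matrix n n ℂ) : ℝ :=
  (ρ * (matLog ρ - matLog σ)).trace.re

/-- `H_γ^↑(A|B)_ρ`: supremum over density matrices `σ_B` of `−D_γ(ρ_AB ‖ 1_A ⊗ σ_B)`
(for `γ > 1` over those `σ_B` whose kernel is contained in that of `ρ_B`). -/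
noncomputable def condRenyiUp {a b : Type*} [Fintype a] [DecidableEq a] [Fintype b] [DecidableEq b]
    (gamma : ℝ) (ρ : Matrix (a × b) (a × b) ℂ) : ℝ :=
  sSup {x : ℝ | ∃ σ : Matrix b b ℂ, σ.PosSemidef ∧ σ.trace = 1 ∧
    (1 < gamma → LinearMap.ker σ.mulVecLin ≤ LinearMap.ker (trFst ρ).mulVecLin) ∧
    x = -renyiDiv gamma ρ ((1 : Matrix a a ℂ) ⊗ₖ σ)}

/-!
Write a purification of `ρ` along a system `D` as an operator `ψ : C → A ⊗ B ⊗ D`, and let `V` be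
the isometry `∑ y, |y⟩ ⊗ √(N y)`, which measures `N` coherently. Since `αβ = 1`, duality of Rényi
divergences gives an explicit classical-quantum state `w = ∑ y, |y⟩⟨y| ⊗ w y` on `Y ⊗ A ⊗ B ⊗ D`
with `H̃_β^↓(Y|C) = D_α(V ψ ψᴴ Vᴴ ‖ w)`.

Undoing `V`, measuring `M` and discarding everything but the outcome and `B` maps `V ψ ψᴴ Vᴴ` to
`ρ_XB`, and maps `w` to an operator below `c² • 1 ⊗ σ` with `σ` the marginal of `w` on `B`, because
`√(N y) M x √(N y) ≤ c²`. Data processing yields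
`H̃_β^↓(Y|C) ≥ D_α(ρ_XB ‖ c² • 1 ⊗ σ) = D_α(ρ_XB ‖ 1 ⊗ σ) - log c²`, so the relation holds even
with `log (1 / c²)`, and `c ≤ 1`.

For `0 < α < 2`, integrating over `t` the resolvent functions `p² / (p + t q)` of the
Nussbaum–Szkoła distribution represents `tr (ρ ^ α σ ^ (1 - α))`. Each of them is the maximum over
`X` of the quadratic form `2 Re tr (ρ X) - tr (X ρ Xᴴ) - t tr (Xᴴ σ X)`, and the Kadison–Schwarz
inequality shows that pulling `X` back along a channel does not decrease this form.
-/

section FunctionalCalculus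

open Polynomial

variable {m n : Type*} [Fintype m] [DecidableEq m] [Fintype n] [DecidableEq n]
  {A : Matrix m m ℂ} {B : Matrix n n ℂ}

lemma continuousOn_real_spectrum (f : ℝ → ℝ) (A : Matrix n n ℂ) :
    ContinuousOn f (spectrum ℝ A) :=
  A.finite_real_spectrum.continuousOn f

lemma cfc_eq_aeval {f : ℝ → ℝ} {p : ℝ[X]} (hA : A.IsHermitian)
    (h : (spectrum ℝ A).EqOn f p.eval) : cfc f A = aeval A p := by
  rw [cfc_congr h, cfc_polynomial p A hA.isSelfAdjoint]

lemma exists_polynomial_cfc_eq_aeval (f : ℝ → ℝ) (hA : A.IsHermitian) (hB : B.IsHermitian) :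
    ∃ p : ℝ[X], cfc f A = aeval A p ∧ cfc f B = aeval B p := by
  have hfin := A.finite_real_spectrum.union B.finite_real_spectrum
  have hp : (spectrum ℝ A ∪ spectrum ℝ B).EqOn f
      (Lagrange.interpolate hfin.toFinset id f).eval := fun x hx ↦
    (Lagrange.eval_interpolate_at_node f Function.injective_id.injOn (hfin.mem_toFinset.2 hx)).symm
  exact ⟨_, cfc_eq_aeval hA (hp.mono Set.subset_union_left),
    cfc_eq_aeval hB (hp.mono Set.subset_union_right)⟩

lemma aeval_mul_eq_mul_aeval (p : ℝ[X]) {T : Matrix m n ℂ} (h : A * T = T * B) :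
    aeval A p * T = T * aeval B p := by
  have hpow (k : ℕ) : A ^ k * T = T * B ^ k := by
    induction k with
    | zero => simp
    | succ k ih =>
      rw [pow_succ, Matrix.mul_assoc, h, ← Matrix.mul_assoc, ih, Matrix.mul_assoc, ← pow_succ]
  simp only [aeval_eq_sum_range, Matrix.sum_mul, Matrix.mul_sum, Matrix.smul_mul, Matrix.mul_smul,
    hpow]

lemma cfc_mul_eq_mul_cfc (f : ℝ → ℝ) (hA : A.IsHermitian) (hB : B.IsHermitian)
    {T : Matrix m n ℂ} (h : A * T = T * B) : cfc f A * T = T * cfc f B := by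
  obtain ⟨p, hpA, hpB⟩ := exists_polynomial_cfc_eq_aeval f hA hB
  rw [hpA, hpB, aeval_mul_eq_mul_aeval p h]

lemma transpose_cfc (f : ℝ → ℝ) (hA : A.IsHermitian) : (cfc f A)ᵀ = cfc f Aᵀ := by
  obtain ⟨p, hp, hpT⟩ := exists_polynomial_cfc_eq_aeval f hA hA.transpose
  rw [hp, hpT, aeval_eq_sum_range, aeval_eq_sum_range, transpose_sum]
  simp only [transpose_smul, transpose_pow]

/-- The real power `x ^ t` with the convention `0 ^ t = 0`; `matRpow · t` is its functional
calculus. -/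
noncomputable def suppRpow (t x : ℝ) : ℝ := if x = 0 then 0 else x ^ t

lemma suppRpow_of_pos (t : ℝ) {x : ℝ} (hx : 0 < x) : suppRpow t x = x ^ t := if_neg hx.ne'

lemma suppRpow_nonneg (t : ℝ) {x : ℝ} (hx : 0 ≤ x) : 0 ≤ suppRpow t x := by
  unfold suppRpow; split_ifs <;> positivity

lemma suppRpow_one (x : ℝ) : suppRpow 1 x = x := by
  unfold suppRpow; split_ifs with h <;> simp [h]

lemma suppRpow_mul_suppRpow (s t : ℝ) {x : ℝ} (hx : 0 ≤ x) :
    suppRpow s x * suppRpow t x = suppRpow (s + t) x := by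
  rcases hx.eq_or_lt with rfl | h
  · simp [suppRpow]
  · simp [suppRpow, h.ne', Real.rpow_add h]

lemma suppRpow_suppRpow (s t : ℝ) {x : ℝ} (hx : 0 ≤ x) :
    suppRpow t (suppRpow s x) = suppRpow (s * t) x := by
  rcases hx.eq_or_lt with rfl | h
  · simp [suppRpow]
  · simp [suppRpow, h.ne', (Real.rpow_pos_of_pos h s).ne', Real.rpow_mul hx]

lemma suppRpow_mul (t : ℝ) {x y : ℝ} (hx : 0 ≤ x) (hy : 0 ≤ y) :
    suppRpow t (x * y) = suppRpow t x * suppRpow t y := by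
  rcases hx.eq_or_lt with rfl | hx'
  · simp [suppRpow]
  rcases hy.eq_or_lt with rfl | hy'
  · simp [suppRpow]
  simp [suppRpow, hx'.ne', hy'.ne', Real.mul_rpow hx hy]

lemma matRpow_eq_cfc (A : Matrix n n ℂ) (t : ℝ) : matRpow A t = cfc (suppRpow t) A := by
  by_cases hA : A.IsHermitian
  · rw [hA.cfc_eq, matRpow, dif_pos hA]
    rfl
  · rw [matRpow, dif_neg hA, cfc_apply_of_not_predicate A (mt (·.isHermitian) hA)]

lemma isHermitian_matRpow (A : Matrix n n ℂ) (t : ℝ) : (matRpow A t).IsHermitian := by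
  rw [matRpow_eq_cfc]
  exact cfc_predicate _ A

open scoped MatrixOrder in
lemma cfc_congr_of_posSemidef {f g : ℝ → ℝ} {A : Matrix n n ℂ} (hA : A.PosSemidef)
    (h : ∀ x, 0 ≤ x → f x = g x) : cfc f A = cfc g A :=
  cfc_congr fun _ hx ↦ h _ (spectrum_nonneg_of_nonneg hA.nonneg hx)

open scoped MatrixOrder in
lemma posSemidef_matRpow (hA : A.PosSemidef) (t : ℝ) : (matRpow A t).PosSemidef := by
  rw [matRpow_eq_cfc, ← nonneg_iff_posSemidef]
  exact cfc_nonneg fun x hx ↦ suppRpow_nonneg t (spectrum_nonneg_of_nonneg hA.nonneg hx)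

lemma matRpow_one (hA : A.IsHermitian) : matRpow A 1 = A := by
  rw [matRpow_eq_cfc, cfc_congr fun x _ ↦ suppRpow_one x, cfc_id' ℝ A hA.isSelfAdjoint]

lemma matRpow_mul_matRpow (hA : A.PosSemidef) (s t : ℝ) :
    matRpow A s * matRpow A t = matRpow A (s + t) := by
  simp only [matRpow_eq_cfc]
  rw [← cfc_mul _ _ _ (continuousOn_real_spectrum _ A) (continuousOn_real_spectrum _ A)]
  exact cfc_congr_of_posSemidef hA fun x hx ↦ suppRpow_mul_suppRpow s t hx

lemma matRpow_matRpow (hA : A.PosSemidef) (s t : ℝ) :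
    matRpow (matRpow A s) t = matRpow A (s * t) := by
  simp only [matRpow_eq_cfc]
  rw [← cfc_comp' _ _ _ ((A.finite_real_spectrum.image _).continuousOn _)
    (continuousOn_real_spectrum _ A) hA.1.isSelfAdjoint]
  exact cfc_congr_of_posSemidef hA fun x hx ↦ suppRpow_suppRpow s t hx

lemma matRpow_smul {k : ℝ} (hk : 0 ≤ k) (hA : A.PosSemidef) (t : ℝ) :
    matRpow (k • A) t = suppRpow t k • matRpow A t := by
  simp only [matRpow_eq_cfc]
  rw [← cfc_comp_const_mul k _ A ((A.finite_real_spectrum.image _).continuousOn _)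
      hA.1.isSelfAdjoint,
    cfc_congr_of_posSemidef hA fun x hx ↦ suppRpow_mul t hk hx,
    cfc_const_mul _ _ _ (continuousOn_real_spectrum _ A)]

lemma transpose_matRpow (hA : A.IsHermitian) (t : ℝ) : (matRpow A t)ᵀ = matRpow Aᵀ t := by
  simp only [matRpow_eq_cfc, transpose_cfc _ hA]

lemma matRpow_mul_eq_mul_matRpow (t : ℝ) (hA : A.IsHermitian) (hB : B.IsHermitian)
    {T : Matrix m n ℂ} (h : A * T = T * B) : matRpow A t * T = T * matRpow B t := by
  simpa only [matRpow_eq_cfc] using cfc_mul_eq_mul_cfc _ hA hB h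

lemma matRpow_mul_conjTranspose_self (T : Matrix m n ℂ) (t : ℝ) :
    matRpow (T * Tᴴ) t = T * matRpow (Tᴴ * T) (t - 1) * Tᴴ := by
  have hpsd := posSemidef_self_mul_conjTranspose T
  have hcomm := matRpow_mul_eq_mul_matRpow (t - 1) hpsd.1 (isHermitian_conjTranspose_mul_self T)
    (Matrix.mul_assoc T Tᴴ T)
  calc matRpow (T * Tᴴ) t = matRpow (T * Tᴴ) (t - 1) * (T * Tᴴ) := by
        nth_rw 3 [← matRpow_one hpsd.1]
        rw [matRpow_mul_matRpow hpsd, sub_add_cancel]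
    _ = T * matRpow (Tᴴ * T) (t - 1) * Tᴴ := by rw [← Matrix.mul_assoc, hcomm]

lemma trace_matRpow_mul_conjTranspose_self (T : Matrix m n ℂ) (t : ℝ) :
    (matRpow (T * Tᴴ) t).trace = (matRpow (Tᴴ * T) t).trace := by
  have hpsd := posSemidef_conjTranspose_mul_self T
  rw [matRpow_mul_conjTranspose_self, trace_mul_comm, ← Matrix.mul_assoc]
  nth_rw 1 [← matRpow_one hpsd.1]
  rw [matRpow_mul_matRpow hpsd, add_sub_cancel]

lemma matRpow_isometry_conj {V : Matrix m n ℂ} (hV : Vᴴ * V = 1) (hB : B.PosSemidef) (t : ℝ) :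
    matRpow (V * B * Vᴴ) t = V * matRpow B t * Vᴴ := by
  have hpsd := hB.mul_mul_conjTranspose_same V
  have hcomm := matRpow_mul_eq_mul_matRpow (T := V) (t - 1) hpsd.1 hB.1
    (by rw [Matrix.mul_assoc, hV, Matrix.mul_one])
  calc matRpow (V * B * Vᴴ) t = matRpow (V * B * Vᴴ) (t - 1) * (V * B * Vᴴ) := by
        nth_rw 3 [← matRpow_one hpsd.1]
        rw [matRpow_mul_matRpow hpsd, sub_add_cancel]
    _ = V * (matRpow B (t - 1) * matRpow B 1) * Vᴴ := by
        rw [matRpow_one hB.1, ← Matrix.mul_assoc, ← Matrix.mul_assoc, hcomm, ← Matrix.mul_assoc]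
    _ = V * matRpow B t * Vᴴ := by rw [matRpow_mul_matRpow hB, sub_add_cancel]

lemma matRpow_mulVec_eq_zero_iff (hA : A.PosSemidef) (t : ℝ) (v : m → ℂ) :
    matRpow A t *ᵥ v = 0 ↔ A *ᵥ v = 0 := by
  have hker (s r : ℝ) (h : matRpow A s *ᵥ v = 0) : matRpow A r *ᵥ v = 0 := by
    rw [← sub_add_cancel r s, ← matRpow_mul_matRpow hA, ← mulVec_mulVec, h, mulVec_zero]
  nth_rw 2 [← matRpow_one hA.1]
  exact ⟨hker t 1, hker 1 t⟩

end FunctionalCalculus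

section TraceInequalities

variable {m n : Type*} [Fintype m] [Fintype n] {A B ρ : Matrix n n ℂ}

open scoped MatrixOrder in
lemma exists_conjTranspose_mul_self_eq (hA : A.PosSemidef) : ∃ S : Matrix n n ℂ, Sᴴ * S = A := by
  classical
  obtain ⟨S, hS⟩ := CStarAlgebra.nonneg_iff_eq_star_mul_self.mp hA.nonneg
  exact ⟨S, hS.symm⟩

lemma re_trace_nonneg (hA : A.PosSemidef) : 0 ≤ A.trace.re :=
  (Complex.nonneg_iff.1 hA.trace_nonneg).1

lemma ofReal_re_trace (hA : A.PosSemidef) : (A.trace.re : ℂ) = A.trace :=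
  (Complex.eq_re_of_ofReal_le (r := 0) (by simpa using hA.trace_nonneg)).symm

lemma re_trace_pos (hA : A.PosSemidef) (h : A ≠ 0) : 0 < A.trace.re := by
  refine (re_trace_nonneg hA).lt_of_ne' fun h0 ↦ h (hA.trace_eq_zero_iff.1 ?_)
  rw [← ofReal_re_trace hA, h0, Complex.ofReal_zero]

lemma re_trace_conjTranspose (A : Matrix n n ℂ) : Aᴴ.trace.re = A.trace.re := by
  rw [trace_conjTranspose, Complex.star_def, Complex.conj_re]

lemma re_trace_mul_nonneg (hA : A.PosSemidef) (hB : B.PosSemidef) : 0 ≤ (A * B).trace.re := by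
  obtain ⟨S, rfl⟩ := exists_conjTranspose_mul_self_eq hA
  rw [Matrix.mul_assoc, trace_mul_comm]
  exact re_trace_nonneg (hB.mul_mul_conjTranspose_same S)

lemma re_trace_mul_le_re_trace_mul (hρ : ρ.PosSemidef) (h : (B - A).PosSemidef) :
    (ρ * A).trace.re ≤ (ρ * B).trace.re := by
  simpa only [Matrix.mul_sub, trace_sub, Complex.sub_re, sub_nonneg] using re_trace_mul_nonneg hρ h

lemma mul_eq_zero_of_re_trace_eq_zero (hA : A.PosSemidef) {T : Matrix n m ℂ}
    (h : (Tᴴ * A * T).trace.re = 0) : A * T = 0 := by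
  obtain ⟨S, rfl⟩ := exists_conjTranspose_mul_self_eq hA
  have h0 : ((S * T)ᴴ * (S * T)).trace = 0 := by
    rw [← ofReal_re_trace (posSemidef_conjTranspose_mul_self _), conjTranspose_mul,
      Matrix.mul_assoc, ← Matrix.mul_assoc Sᴴ, ← Matrix.mul_assoc, h, Complex.ofReal_zero]
  rw [Matrix.mul_assoc, trace_conjTranspose_mul_self_eq_zero_iff.1 h0, Matrix.mul_zero]

lemma mulVec_eq_zero_of_sum_mulVec_eq_zero {X : Type*} [Fintype X] {r : X → Matrix n n ℂ}
    (hr : ∀ x, (r x).PosSemidef) {v : n → ℂ} (h : (∑ x, r x) *ᵥ v = 0) (x : X) :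
    r x *ᵥ v = 0 := by
  rw [← (hr x).dotProduct_mulVec_zero_iff]
  refine (Finset.sum_eq_zero_iff_of_nonneg fun x _ ↦ (hr x).dotProduct_mulVec_nonneg v).1 ?_ x
    (Finset.mem_univ x)
  rw [← dotProduct_sum, ← sum_mulVec, h, dotProduct_zero]

end TraceInequalities

section ClassicalQuantum

variable {X K L : Type*}

/-- The diagonal block `⟨x| Z |x⟩` of an operator on `ℂ^X ⊗ ℂ^K`. -/
def registerBlock (Z : Matrix (X × K) (X × K) ℂ) (x : X) : Matrix K K ℂ :=
  Z.submatrix (Prod.mk x) (Prod.mk x)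

/-- The operator `∑ y, |y⟩ ⊗ F y` from `ℂ^L` to `ℂ^X ⊗ ℂ^K`: the instrument with Kraus operators
`F y`, keeping the outcome in the register. -/
def registerStack (F : X → Matrix K L ℂ) : Matrix (X × K) L ℂ :=
  of fun p l ↦ F p.1 p.2 l

lemma posSemidef_registerBlock_conjTranspose_mul_self_sub [Fintype X] [Fintype K]
    (Z : Matrix (X × K) (X × K) ℂ) (x : X) :
    (registerBlock (Zᴴ * Z) x - (registerBlock Z x)ᴴ * registerBlock Z x).PosSemidef := by
  classical
  have h : registerBlock (Zᴴ * Z) x - (registerBlock Z x)ᴴ * registerBlock Z x =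
      ∑ y with y ≠ x, (Z.submatrix (Prod.mk y) (Prod.mk x))ᴴ *
        Z.submatrix (Prod.mk y) (Prod.mk x) := by
    rw [sub_eq_iff_eq_add, Finset.filter_ne', Finset.sum_erase_eq_sub (Finset.mem_univ x),
      registerBlock, registerBlock, sub_add_cancel]
    ext i j
    simp [Matrix.sum_apply, mul_apply, Fintype.sum_prod_type]
  rw [h]
  exact posSemidef_sum _ fun y _ ↦ posSemidef_conjTranspose_mul_self _

variable [DecidableEq X]

/-- The block-diagonal operator `∑ x, |x⟩⟨x| ⊗ r x`: a classical-quantum operator with classical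
register `X`. It is `Matrix.blockDiagonal` with the register as the first tensor factor. -/
def cqOperator (r : X → Matrix K K ℂ) : Matrix (X × K) (X × K) ℂ :=
  of fun p q ↦ if p.1 = q.1 then r p.1 p.2 q.2 else 0

lemma one_kronecker_eq_cqOperator (σ : Matrix K K ℂ) :
    (1 : Matrix X X ℂ) ⊗ₖ σ = cqOperator fun _ ↦ σ := by
  ext p q
  simp [cqOperator, one_apply]

lemma conjTranspose_cqOperator (r : X → Matrix K K ℂ) :
    (cqOperator r)ᴴ = cqOperator fun x ↦ (r x)ᴴ := by
  ext p q
  rcases eq_or_ne p.1 q.1 with h | h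
  · simp [cqOperator, h]
  · simp [cqOperator, h, h.symm]

lemma cqOperator_smul (k : ℝ) (r : X → Matrix K K ℂ) :
    k • cqOperator r = cqOperator fun x ↦ k • r x := by
  ext p q
  simp [cqOperator]

lemma cqOperator_one [DecidableEq K] : cqOperator (fun _ : X ↦ (1 : Matrix K K ℂ)) = 1 := by
  rw [← one_kronecker_eq_cqOperator, one_kronecker_one]

variable [Fintype X]

lemma trFst_cqOperator (r : X → Matrix K K ℂ) : trFst (cqOperator r) = ∑ x, r x := by
  ext i j
  simp [trFst, cqOperator, Matrix.sum_apply]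

variable [Fintype K]

lemma cqOperator_mul_cqOperator (r s : X → Matrix K K ℂ) :
    cqOperator r * cqOperator s = cqOperator fun x ↦ r x * s x := by
  ext ⟨x, i⟩ ⟨y, j⟩
  simp only [cqOperator, mul_apply, Fintype.sum_prod_type, of_apply]
  split_ifs with h
  · subst h
    simp
  · simp [h]

lemma trace_cqOperator_mul (r : X → Matrix K K ℂ) (Z : Matrix (X × K) (X × K) ℂ) :
    (cqOperator r * Z).trace = ∑ x, (r x * registerBlock Z x).trace := by
  simp [trace, mul_apply, Fintype.sum_prod_type, cqOperator, registerBlock]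

lemma trace_cqOperator (r : X → Matrix K K ℂ) : (cqOperator r).trace = ∑ x, (r x).trace := by
  simp [trace, Fintype.sum_prod_type, cqOperator]

lemma cqOperator_mulVec_apply (r : X → Matrix K K ℂ) (v : X × K → ℂ) (x : X) (i : K) :
    (cqOperator r *ᵥ v) (x, i) = (r x *ᵥ fun j ↦ v (x, j)) i := by
  simp [mulVec, dotProduct, cqOperator, Fintype.sum_prod_type]

lemma cqOperator_mulVec_eq_zero_iff {r : X → Matrix K K ℂ} {v : X × K → ℂ} :
    cqOperator r *ᵥ v = 0 ↔ ∀ x, (r x *ᵥ fun i ↦ v (x, i)) = 0 := by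
  simp only [funext_iff, Prod.forall, cqOperator_mulVec_apply, Pi.zero_apply]

lemma conjTranspose_registerStack_mul_cqOperator_mul (F : X → Matrix K L ℂ)
    (r : X → Matrix K K ℂ) :
    (registerStack F)ᴴ * cqOperator r * registerStack F = ∑ y, (F y)ᴴ * r y * F y := by
  have h : cqOperator r * registerStack F = registerStack fun y ↦ r y * F y := by
    ext p l
    simp [mul_apply, Fintype.sum_prod_type, cqOperator, registerStack]
  rw [Matrix.mul_assoc, h]
  ext i j
  simp [mul_apply, Matrix.sum_apply, Fintype.sum_prod_type, registerStack, Matrix.mul_assoc]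

lemma mulVec_eq_zero_of_trFst_cqOperator {r : X → Matrix K K ℂ} (hr : ∀ x, (r x).PosSemidef)
    {σ : Matrix K K ℂ} (h : ∀ w, σ *ᵥ w = 0 → trFst (cqOperator r) *ᵥ w = 0)
    {v : X × K → ℂ} (hv : ((1 : Matrix X X ℂ) ⊗ₖ σ) *ᵥ v = 0) : cqOperator r *ᵥ v = 0 := by
  rw [one_kronecker_eq_cqOperator, cqOperator_mulVec_eq_zero_iff] at hv
  rw [trFst_cqOperator] at h
  exact cqOperator_mulVec_eq_zero_iff.2 fun x ↦
    mulVec_eq_zero_of_sum_mulVec_eq_zero hr (h _ (hv x)) x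

lemma trFst_cqOperator_mulVec_eq_zero {r : X → Matrix K K ℂ} {σ : Matrix K K ℂ}
    (h : ∀ v, ((1 : Matrix X X ℂ) ⊗ₖ σ) *ᵥ v = 0 → cqOperator r *ᵥ v = 0)
    {w : K → ℂ} (hw : σ *ᵥ w = 0) : trFst (cqOperator r) *ᵥ w = 0 := by
  simp only [one_kronecker_eq_cqOperator, cqOperator_mulVec_eq_zero_iff] at h
  rw [trFst_cqOperator, sum_mulVec]
  exact Finset.sum_eq_zero fun x _ ↦ h (fun p ↦ w p.2) (fun _ ↦ hw) x

variable [DecidableEq K]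

lemma matRpow_cqOperator {r : X → Matrix K K ℂ} (hr : ∀ x, (r x).IsHermitian) (t : ℝ) :
    matRpow (cqOperator r) t = cqOperator fun x ↦ matRpow (r x) t := by
  have hcq : (cqOperator r).IsHermitian := by
    rw [Matrix.IsHermitian, conjTranspose_cqOperator]
    exact congrArg cqOperator (funext hr)
  ext p ⟨x, j⟩
  have hcomm : cqOperator r * (1 : Matrix (X × K) (X × K) ℂ).submatrix id (Prod.mk x) =
      (1 : Matrix (X × K) (X × K) ℂ).submatrix id (Prod.mk x) * r x := by
    ext q k
    rcases eq_or_ne q.1 x with h | h <;>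
      simp [mul_apply, one_apply, cqOperator, Prod.ext_iff, h, ite_and, Fintype.sum_prod_type]
  have h := congrFun₂ (matRpow_mul_eq_mul_matRpow t hcq (hr x) hcomm) p j
  rcases eq_or_ne p.1 x with hx | hx <;>
    simpa [mul_apply, one_apply, cqOperator, Prod.ext_iff, hx, ite_and, Fintype.sum_prod_type]
      using h

end ClassicalQuantum

lemma posSemidef_cqOperator {X K : Type*} [DecidableEq X] [Finite X] [Finite K]
    {r : X → Matrix K K ℂ} (hr : ∀ x, (r x).PosSemidef) :
    (cqOperator r).PosSemidef := by
  cases nonempty_fintype X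
  cases nonempty_fintype K
  choose S hS using fun x ↦ exists_conjTranspose_mul_self_eq (hr x)
  have h := posSemidef_conjTranspose_mul_self (cqOperator S)
  simpa only [conjTranspose_cqOperator, cqOperator_mul_cqOperator, hS] using h

section NussbaumSzkola

variable {n : Type*} [Fintype n] [DecidableEq n] {ρ σ : Matrix n n ℂ}

lemma cfc_eq_eigenvectorUnitary_mul (hρ : ρ.IsHermitian) (f : ℝ → ℝ) :
    cfc f ρ = (hρ.eigenvectorUnitary : Matrix n n ℂ) *
      diagonal (fun i ↦ (f (hρ.eigenvalues i) : ℂ)) * (hρ.eigenvectorUnitary : Matrix n n ℂ)ᴴ := by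
  rw [hρ.cfc_eq]
  rfl

lemma eigenvectorUnitary_conjTranspose_mul_self (hρ : ρ.IsHermitian) :
    (hρ.eigenvectorUnitary : Matrix n n ℂ)ᴴ * hρ.eigenvectorUnitary = 1 :=
  Unitary.coe_star_mul_self _

lemma eigenvectorUnitary_conjTranspose_mul_cancel (hρ : ρ.IsHermitian) (M : Matrix n n ℂ) :
    (hρ.eigenvectorUnitary : Matrix n n ℂ)ᴴ * ((hρ.eigenvectorUnitary : Matrix n n ℂ) * M) = M := by
  rw [← Matrix.mul_assoc, eigenvectorUnitary_conjTranspose_mul_self, Matrix.one_mul]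

lemma mul_eigenvectorUnitary (hρ : ρ.IsHermitian) :
    ρ * (hρ.eigenvectorUnitary : Matrix n n ℂ) =
      (hρ.eigenvectorUnitary : Matrix n n ℂ) * diagonal (fun i ↦ (hρ.eigenvalues i : ℂ)) := by
  have h := cfc_eq_eigenvectorUnitary_mul hρ fun x ↦ x
  rw [cfc_id' ℝ ρ hρ.isSelfAdjoint] at h
  nth_rw 1 [h]
  rw [Matrix.mul_assoc, eigenvectorUnitary_conjTranspose_mul_self, Matrix.mul_one]

/-- The double operator integral with symbol `f`: in the eigenbases `u i` of `ρ` and `v j` of `σ`,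
the operator `∑ i j, f (λ i) (μ j) |v j⟩⟨v j, u i⟩⟨u i|`. -/
noncomputable def doubleOperatorIntegral (hρ : ρ.IsHermitian) (hσ : σ.IsHermitian)
    (f : ℝ → ℝ → ℝ) : Matrix n n ℂ :=
  (hσ.eigenvectorUnitary : Matrix n n ℂ) *
    of (fun j i ↦ (f (hρ.eigenvalues i) (hσ.eigenvalues j) : ℂ) *
      ((hσ.eigenvectorUnitary : Matrix n n ℂ)ᴴ * hρ.eigenvectorUnitary) j i) *
    (hρ.eigenvectorUnitary : Matrix n n ℂ)ᴴ

/-- The sum `∑ i j, f (λ i) (μ j) * |⟨u i, v j⟩|²` over the eigenpairs `(λ i, u i)` of `ρ` and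
`(μ j, v j)` of `σ`, through which traces of products of functions of `ρ` and `σ` are computed
(the expectation of `f / λ` under the Nussbaum–Szkoła distribution). -/
noncomputable def overlapSum (hρ : ρ.IsHermitian) (hσ : σ.IsHermitian) (f : ℝ → ℝ → ℝ) : ℝ :=
  ∑ i, ∑ j, f (hρ.eigenvalues i) (hσ.eigenvalues j) *
    Complex.normSq (((hρ.eigenvectorUnitary : Matrix n n ℂ)ᴴ * hσ.eigenvectorUnitary) i j)

lemma re_trace_doubleOperatorIntegral (hρ : ρ.IsHermitian) (hσ : σ.IsHermitian)
    (f : ℝ → ℝ → ℝ) : (doubleOperatorIntegral hρ hσ f).trace.re = overlapSum hρ hσ f := by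
  have h : (hσ.eigenvectorUnitary : Matrix n n ℂ)ᴴ * (hρ.eigenvectorUnitary : Matrix n n ℂ) =
      ((hρ.eigenvectorUnitary : Matrix n n ℂ)ᴴ * (hσ.eigenvectorUnitary : Matrix n n ℂ))ᴴ := by
    rw [conjTranspose_mul, conjTranspose_conjTranspose]
  rw [doubleOperatorIntegral, Matrix.mul_assoc, trace_mul_comm, Matrix.mul_assoc, trace_mul_comm,
    h, trace, Complex.re_sum, overlapSum]
  refine Finset.sum_congr rfl fun i _ ↦ ?_
  rw [diag_apply, Matrix.mul_apply, Complex.re_sum]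
  refine Finset.sum_congr rfl fun j _ ↦ ?_
  rw [of_apply, conjTranspose_apply, Complex.normSq_apply]
  simp only [Complex.star_def, Complex.mul_re, Complex.mul_im, Complex.ofReal_re,
    Complex.ofReal_im, Complex.conj_re, Complex.conj_im]
  ring

lemma doubleOperatorIntegral_one (hρ : ρ.IsHermitian) (hσ : σ.IsHermitian) :
    doubleOperatorIntegral hρ hσ (fun _ _ ↦ 1) = 1 := by
  have h (M : Matrix n n ℂ) : (of fun j i ↦ ((1 : ℝ) : ℂ) * M j i) = M := by
    ext
    simp
  rw [doubleOperatorIntegral, h, ← Matrix.mul_assoc,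
    mul_eq_one_comm.1 (eigenvectorUnitary_conjTranspose_mul_self hσ), Matrix.one_mul,
    mul_eq_one_comm.1 (eigenvectorUnitary_conjTranspose_mul_self hρ)]

lemma doubleOperatorIntegral_mul_cfc (hρ : ρ.IsHermitian) (hσ : σ.IsHermitian) (f : ℝ → ℝ → ℝ)
    (g : ℝ → ℝ) : doubleOperatorIntegral hρ hσ f * cfc g ρ =
      doubleOperatorIntegral hρ hσ fun p q ↦ f p q * g p := by
  simp only [doubleOperatorIntegral, cfc_eq_eigenvectorUnitary_mul hρ, Matrix.mul_assoc,
    eigenvectorUnitary_conjTranspose_mul_cancel]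
  rw [← Matrix.mul_assoc (of _)]
  congr 2
  ext j i
  simp only [mul_diagonal, of_apply, Complex.ofReal_mul]
  ring

lemma cfc_mul_doubleOperatorIntegral (hρ : ρ.IsHermitian) (hσ : σ.IsHermitian) (f : ℝ → ℝ → ℝ)
    (g : ℝ → ℝ) : cfc g σ * doubleOperatorIntegral hρ hσ f =
      doubleOperatorIntegral hρ hσ fun p q ↦ g q * f p q := by
  simp only [doubleOperatorIntegral, cfc_eq_eigenvectorUnitary_mul hσ, Matrix.mul_assoc,
    eigenvectorUnitary_conjTranspose_mul_cancel]
  rw [← Matrix.mul_assoc (diagonal _)]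
  congr 2
  ext j i
  simp only [diagonal_mul, of_apply, Complex.ofReal_mul]
  ring

lemma doubleOperatorIntegral_add_smul (hρ : ρ.IsHermitian) (hσ : σ.IsHermitian)
    (f g : ℝ → ℝ → ℝ) (t : ℝ) :
    doubleOperatorIntegral hρ hσ f + t • doubleOperatorIntegral hρ hσ g =
      doubleOperatorIntegral hρ hσ fun p q ↦ f p q + t * g p q := by
  simp only [doubleOperatorIntegral]
  rw [← Matrix.smul_mul, ← Matrix.mul_smul, ← Matrix.add_mul, ← Matrix.mul_add]
  congr 2
  ext j i
  simp [add_mul, mul_assoc]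

lemma doubleOperatorIntegral_congr (hρ : ρ.PosSemidef) (hσ : σ.PosSemidef) {f g : ℝ → ℝ → ℝ}
    (h : ∀ p q, 0 ≤ p → 0 ≤ q → f p q = g p q) :
    doubleOperatorIntegral hρ.1 hσ.1 f = doubleOperatorIntegral hρ.1 hσ.1 g := by
  simp only [doubleOperatorIntegral, h _ _ (hρ.eigenvalues_nonneg _) (hσ.eigenvalues_nonneg _)]

lemma re_trace_cfc_mul_cfc (hρ : ρ.IsHermitian) (hσ : σ.IsHermitian) (f g : ℝ → ℝ) :
    (cfc f ρ * cfc g σ).trace.re = overlapSum hρ hσ fun p q ↦ f p * g q := by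
  rw [trace_mul_comm, ← Matrix.mul_one (cfc g σ), ← doubleOperatorIntegral_one hρ hσ,
    cfc_mul_doubleOperatorIntegral, doubleOperatorIntegral_mul_cfc,
    re_trace_doubleOperatorIntegral]
  simp only [mul_one, mul_comm]

lemma re_trace_matRpow_mul_matRpow (hρ : ρ.IsHermitian) (hσ : σ.IsHermitian) (s t : ℝ) :
    (matRpow ρ s * matRpow σ t).trace.re =
      overlapSum hρ hσ fun p q ↦ suppRpow s p * suppRpow t q := by
  rw [matRpow_eq_cfc, matRpow_eq_cfc, re_trace_cfc_mul_cfc]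

lemma re_trace_eq_overlapSum (hρ : ρ.IsHermitian) (hσ : σ.IsHermitian) :
    ρ.trace.re = overlapSum hρ hσ fun p _ ↦ p := by
  have h := re_trace_cfc_mul_cfc hρ hσ (fun x ↦ x) (fun _ ↦ 1)
  rw [cfc_id' ℝ ρ hρ.isSelfAdjoint, cfc_const_one ℝ σ hσ.isSelfAdjoint, Matrix.mul_one] at h
  simpa only [mul_one] using h

lemma overlap_eq_zero (hρ : ρ.IsHermitian) (hσ : σ.IsHermitian)
    (hker : ∀ v, σ *ᵥ v = 0 → ρ *ᵥ v = 0) {i j : n} (hi : hρ.eigenvalues i ≠ 0)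
    (hj : hσ.eigenvalues j = 0) :
    ((hρ.eigenvectorUnitary : Matrix n n ℂ)ᴴ * hσ.eigenvectorUnitary) i j = 0 := by
  have hv : ρ *ᵥ ⇑(hσ.eigenvectorBasis j) = 0 :=
    hker _ (by rw [hσ.mulVec_eigenvectorBasis, hj, zero_smul])
  have h : (diagonal (fun i ↦ (hρ.eigenvalues i : ℂ)) *
      ((hρ.eigenvectorUnitary : Matrix n n ℂ)ᴴ * hσ.eigenvectorUnitary)) i j = 0 := by
    have hU := congrArg conjTranspose (mul_eigenvectorUnitary hρ)
    rw [conjTranspose_mul, conjTranspose_mul, hρ.eq, diagonal_conjTranspose] at hU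
    have hD : star (fun i ↦ (hρ.eigenvalues i : ℂ)) = fun i ↦ (hρ.eigenvalues i : ℂ) :=
      funext fun i ↦ Complex.conj_ofReal _
    rw [← Matrix.mul_assoc, ← hD, ← hU, Matrix.mul_assoc, Matrix.mul_apply]
    refine Finset.sum_eq_zero fun a _ ↦ ?_
    rw [show (ρ * (hσ.eigenvectorUnitary : Matrix n n ℂ)) a j = 0 from congrFun hv a, mul_zero]
  rw [diagonal_mul] at h
  exact (mul_eq_zero.1 h).resolve_left (Complex.ofReal_ne_zero.2 hi)

end NussbaumSzkola

section Variational

variable {n : Type*} [Fintype n] {ρ σ : Matrix n n ℂ}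

/-- The concave quadratic form in `X` whose maximum is the resolvent sum `∑ p² / (p + t q)` of the
Nussbaum–Szkoła distribution of `ρ` and `σ`. -/
noncomputable def variationalForm (ρ σ : Matrix n n ℂ) (t : ℝ) (X : Matrix n n ℂ) : ℝ :=
  2 * (ρ * X).trace.re - (X * ρ * Xᴴ).trace.re - t * (Xᴴ * σ * X).trace.re

lemma variationalForm_eq_sub_of_sylvester (hρ : ρ.IsHermitian) (hσ : σ.IsHermitian) {t : ℝ}
    {Y : Matrix n n ℂ} (hY : Y * ρ + t • (σ * Y) = ρ) (X : Matrix n n ℂ) :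
    variationalForm ρ σ t X = (ρ * Y).trace.re -
      (((X - Y) * ρ * (X - Y)ᴴ).trace.re + t * ((X - Y)ᴴ * σ * (X - Y)).trace.re) := by
  have hY' : ρ * Yᴴ + t • (Yᴴ * σ) = ρ := by
    simpa [hρ.eq, hσ.eq, conjTranspose_smul] using congrArg conjTranspose hY
  have hcross (Z : Matrix n n ℂ) :
      (Z * ρ * Yᴴ).trace.re + t * (Yᴴ * σ * Z).trace.re = (ρ * Z).trace.re := by
    nth_rw 2 [← hY']
    rw [Matrix.mul_assoc, trace_mul_comm Z]
    simp [Matrix.add_mul]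
  have hsymm : (Y * ρ * Xᴴ).trace.re + t * (Xᴴ * σ * Y).trace.re = (ρ * X).trace.re := by
    rw [← hcross X, ← re_trace_conjTranspose, ← re_trace_conjTranspose (Xᴴ * σ * Y)]
    simp only [conjTranspose_mul, conjTranspose_conjTranspose, hρ.eq, hσ.eq, Matrix.mul_assoc]
  have hXX := hcross X
  have hYY := hcross Y
  simp only [variationalForm, conjTranspose_sub, Matrix.sub_mul, Matrix.mul_sub, trace_sub,
    Complex.sub_re]
  linarith

variable [DecidableEq n]

lemma exists_sylvester (hρ : ρ.PosSemidef) (hσ : σ.PosSemidef) {t : ℝ} (ht : 0 < t) :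
    ∃ Y : Matrix n n ℂ, Y * ρ + t • (σ * Y) = ρ ∧
      (ρ * Y).trace.re = overlapSum hρ.1 hσ.1 fun p q ↦ p ^ 2 / (p + t * q) := by
  set Y := doubleOperatorIntegral hρ.1 hσ.1 fun p q ↦ p / (p + t * q)
  have hYρ : Y * ρ = doubleOperatorIntegral hρ.1 hσ.1 fun p q ↦ p / (p + t * q) * p := by
    simpa only [cfc_id' ℝ ρ hρ.1.isSelfAdjoint] using
      doubleOperatorIntegral_mul_cfc hρ.1 hσ.1 (fun p q ↦ p / (p + t * q)) fun p ↦ p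
  have hσY : σ * Y = doubleOperatorIntegral hρ.1 hσ.1 fun p q ↦ q * (p / (p + t * q)) := by
    simpa only [cfc_id' ℝ σ hσ.1.isSelfAdjoint] using
      cfc_mul_doubleOperatorIntegral hρ.1 hσ.1 (fun p q ↦ p / (p + t * q)) fun q ↦ q
  have hρ_eq : doubleOperatorIntegral hρ.1 hσ.1 (fun p _ ↦ 1 * p) = ρ := by
    rw [← doubleOperatorIntegral_mul_cfc _ _ (fun _ _ ↦ 1) fun p ↦ p, doubleOperatorIntegral_one,
      Matrix.one_mul, cfc_id' ℝ ρ hρ.1.isSelfAdjoint]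
  refine ⟨Y, ?_, ?_⟩
  · rw [hYρ, hσY, doubleOperatorIntegral_add_smul]
    refine (doubleOperatorIntegral_congr hρ hσ fun p q hp hq ↦ ?_).trans hρ_eq
    have h : p / (p + t * q) * (p + t * q) = p := div_mul_cancel_of_imp fun h ↦
      ((add_eq_zero_iff_of_nonneg hp (mul_nonneg ht.le hq)).1 h).1
    linear_combination h
  · rw [trace_mul_comm, hYρ, re_trace_doubleOperatorIntegral]
    simp only [div_mul_eq_mul_div, sq]

lemma isGreatest_range_variationalForm (hρ : ρ.PosSemidef) (hσ : σ.PosSemidef) {t : ℝ}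
    (ht : 0 < t) : IsGreatest (Set.range (variationalForm ρ σ t))
      (overlapSum hρ.1 hσ.1 fun p q ↦ p ^ 2 / (p + t * q)) := by
  obtain ⟨Y, hY, hR⟩ := exists_sylvester hρ hσ ht
  have h := variationalForm_eq_sub_of_sylvester hρ.1 hσ.1 hY
  rw [← hR]
  refine ⟨⟨Y, by simp [h]⟩, Set.forall_mem_range.2 fun X ↦ ?_⟩
  rw [h, sub_le_self_iff]
  exact add_nonneg (re_trace_nonneg (hρ.mul_mul_conjTranspose_same _))
    (mul_nonneg ht.le (re_trace_nonneg (hσ.conjTranspose_mul_mul_same _)))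

end Variational

section IntegralRepresentation

open MeasureTheory Set

variable {n : Type*} [Fintype n] [DecidableEq n] {ρ σ : Matrix n n ℂ}

lemma integral_rpow_mul_resolvent {r p q : ℝ} (hr : r ∈ Ioo (0 : ℝ) 1) (hp : 0 ≤ p) (hq : 0 ≤ q)
    (h : q = 0 → p = 0) :
    IntegrableOn (fun t ↦ t ^ (r - 1) * (p ^ 2 / (p + t * q))) (Ioi 0) ∧
      ∫ t in Ioi 0, t ^ (r - 1) * (p ^ 2 / (p + t * q)) =
        (∫ t in Ioi 0, Real.rpowIntegrand₀₁ r t 1) * (suppRpow (1 + r) p * suppRpow (-r) q) := by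
  rcases hp.eq_or_lt with rfl | hp'
  · simp [suppRpow]
  have hq' : 0 < q := hq.lt_of_ne' (mt h hp'.ne')
  have hpq : 0 ≤ p / q := by positivity
  have heq : EqOn (fun t ↦ t ^ (r - 1) * (p ^ 2 / (p + t * q)))
      (fun t ↦ p * Real.rpowIntegrand₀₁ r t (p / q)) (Ioi 0) := fun t (ht : 0 < t) ↦ by
    simp only [Real.rpowIntegrand₀₁_eq_pow_div hr ht.le hpq]
    field_simp
    ring
  refine ⟨(integrableOn_congr_fun heq measurableSet_Ioi).2
    ((Real.integrableOn_rpowIntegrand₀₁_Ioi hr hpq).const_mul _), ?_⟩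
  rw [setIntegral_congr_fun measurableSet_Ioi heq, integral_const_mul,
    Real.integral_rpowIntegrand₀₁_eq_rpow_mul_const hr hpq, suppRpow_of_pos _ hp',
    suppRpow_of_pos _ hq', Real.rpow_add hp', Real.rpow_one, Real.rpow_neg hq,
    Real.div_rpow hp hq]
  field_simp

lemma integral_rpow_mul_sub_resolvent {a p q : ℝ} (ha : a ∈ Ioo (0 : ℝ) 1) (hp : 0 ≤ p)
    (hq : 0 ≤ q) :
    IntegrableOn (fun t ↦ t ^ (a - 2) * (p - p ^ 2 / (p + t * q))) (Ioi 0) ∧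
      ∫ t in Ioi 0, t ^ (a - 2) * (p - p ^ 2 / (p + t * q)) =
        (∫ t in Ioi 0, Real.rpowIntegrand₀₁ a t 1) * (suppRpow a p * suppRpow (1 - a) q) := by
  rcases hp.eq_or_lt with rfl | hp'
  · simp [suppRpow]
  rcases hq.eq_or_lt with rfl | hq'
  · have h : p ^ 2 / p = p := by field_simp
    simp [h, suppRpow]
  have hpq : 0 ≤ p / q := by positivity
  have heq : EqOn (fun t ↦ t ^ (a - 2) * (p - p ^ 2 / (p + t * q)))
      (fun t ↦ q * Real.rpowIntegrand₀₁ a t (p / q)) (Ioi 0) := fun t (ht : 0 < t) ↦ by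
    have hpow : t ^ (a - 1) = t ^ (a - 2) * t := by
      rw [← Real.rpow_add_one ht.ne']
      ring_nf
    simp only [Real.rpowIntegrand₀₁_eq_pow_div ha ht.le hpq, hpow]
    field_simp
    ring
  refine ⟨(integrableOn_congr_fun heq measurableSet_Ioi).2
    ((Real.integrableOn_rpowIntegrand₀₁_Ioi ha hpq).const_mul _), ?_⟩
  rw [setIntegral_congr_fun measurableSet_Ioi heq, integral_const_mul,
    Real.integral_rpowIntegrand₀₁_eq_rpow_mul_const ha hpq, suppRpow_of_pos _ hp',
    suppRpow_of_pos _ hq', Real.rpow_sub hq', Real.rpow_one, Real.div_rpow hp hq]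
  field_simp

lemma integral_mul_overlapSum (hρ : ρ.IsHermitian) (hσ : σ.IsHermitian) {w : ℝ → ℝ}
    {F : ℝ → ℝ → ℝ → ℝ} {G : ℝ → ℝ → ℝ} {k : ℝ} {s : Set ℝ}
    (h : ∀ i j,
      ((hρ.eigenvectorUnitary : Matrix n n ℂ)ᴴ * hσ.eigenvectorUnitary) i j ≠ 0 →
      IntegrableOn (fun t ↦ w t * F t (hρ.eigenvalues i) (hσ.eigenvalues j)) s ∧
        ∫ t in s, w t * F t (hρ.eigenvalues i) (hσ.eigenvalues j) =
          k * G (hρ.eigenvalues i) (hσ.eigenvalues j)) :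
    IntegrableOn (fun t ↦ w t * overlapSum hρ hσ (F t)) s ∧
      ∫ t in s, w t * overlapSum hρ hσ (F t) = k * overlapSum hρ hσ G := by
  set O := (hρ.eigenvectorUnitary : Matrix n n ℂ)ᴴ * hσ.eigenvectorUnitary with hO
  have hterm (i j : n) :
      IntegrableOn (fun t ↦ w t * F t (hρ.eigenvalues i) (hσ.eigenvalues j) *
        Complex.normSq (O i j)) s ∧
      ∫ t in s, w t * F t (hρ.eigenvalues i) (hσ.eigenvalues j) * Complex.normSq (O i j) =
        k * G (hρ.eigenvalues i) (hσ.eigenvalues j) * Complex.normSq (O i j) := by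
    by_cases hij : O i j = 0
    · simp [hij]
    · obtain ⟨hintegrable, heq⟩ := h i j hij
      exact ⟨hintegrable.mul_const _, by rw [integral_mul_const, heq]⟩
  simp only [overlapSum, ← hO, Finset.mul_sum, ← mul_assoc]
  have hrow (i : n) := integrable_finsetSum Finset.univ fun j _ ↦ (hterm i j).1
  refine ⟨integrable_finsetSum _ fun i _ ↦ hrow i, ?_⟩
  rw [integral_finsetSum _ fun i _ ↦ hrow i]
  refine Finset.sum_congr rfl fun i _ ↦ ?_
  rw [integral_finsetSum _ fun j _ ↦ (hterm i j).1]
  exact Finset.sum_congr rfl fun j _ ↦ (hterm i j).2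

lemma integral_rpow_mul_resolventSum (hρ : ρ.PosSemidef) (hσ : σ.PosSemidef)
    (hker : ∀ v, σ *ᵥ v = 0 → ρ *ᵥ v = 0) {α : ℝ} (hα : α ∈ Ioo (1 : ℝ) 2) :
    IntegrableOn (fun t ↦ t ^ (α - 2) *
        overlapSum hρ.1 hσ.1 fun p q ↦ p ^ 2 / (p + t * q)) (Ioi 0) ∧
      ∫ t in Ioi 0, t ^ (α - 2) * overlapSum hρ.1 hσ.1 (fun p q ↦ p ^ 2 / (p + t * q)) =
        (∫ t in Ioi 0, Real.rpowIntegrand₀₁ (α - 1) t 1) *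
          (matRpow ρ α * matRpow σ (1 - α)).trace.re := by
  rw [re_trace_matRpow_mul_matRpow hρ.1 hσ.1]
  refine integral_mul_overlapSum hρ.1 hσ.1 fun i j hij ↦ ?_
  have h := integral_rpow_mul_resolvent ⟨sub_pos.2 hα.1, by linarith [hα.2]⟩
    (hρ.eigenvalues_nonneg i) (hσ.eigenvalues_nonneg j) fun hj ↦
      not_not.1 fun hi ↦ hij (overlap_eq_zero hρ.1 hσ.1 hker hi hj)
  rwa [add_sub_cancel, neg_sub, sub_sub, one_add_one_eq_two] at h

lemma integral_rpow_mul_trace_sub_resolventSum (hρ : ρ.PosSemidef) (hσ : σ.PosSemidef) {α : ℝ}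
    (hα : α ∈ Ioo (0 : ℝ) 1) :
    IntegrableOn (fun t ↦ t ^ (α - 2) *
        (ρ.trace.re - overlapSum hρ.1 hσ.1 fun p q ↦ p ^ 2 / (p + t * q))) (Ioi 0) ∧
      ∫ t in Ioi 0, t ^ (α - 2) *
          (ρ.trace.re - overlapSum hρ.1 hσ.1 fun p q ↦ p ^ 2 / (p + t * q)) =
        (∫ t in Ioi 0, Real.rpowIntegrand₀₁ α t 1) *
          (matRpow ρ α * matRpow σ (1 - α)).trace.re := by
  have hsub (t : ℝ) : ρ.trace.re - overlapSum hρ.1 hσ.1 (fun p q ↦ p ^ 2 / (p + t * q)) =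
      overlapSum hρ.1 hσ.1 fun p q ↦ p - p ^ 2 / (p + t * q) := by
    simp only [re_trace_eq_overlapSum hρ.1 hσ.1, overlapSum, sub_mul, Finset.sum_sub_distrib]
  simp only [hsub, re_trace_matRpow_mul_matRpow hρ.1 hσ.1]
  exact integral_mul_overlapSum hρ.1 hσ.1 fun i j _ ↦
    integral_rpow_mul_sub_resolvent hα (hρ.eigenvalues_nonneg i) (hσ.eigenvalues_nonneg j)

end IntegralRepresentation

lemma re_trace_matRpow_mul_matRpow_pos {n : Type*} [Fintype n] [DecidableEq n]
    {ρ σ : Matrix n n ℂ} (hρ : ρ.PosSemidef) (hσ : σ.PosSemidef)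
    (hker : ∀ v, σ *ᵥ v = 0 → ρ *ᵥ v = 0) (hρ0 : ρ ≠ 0) (α : ℝ) :
    0 < (matRpow ρ α * matRpow σ (1 - α)).trace.re := by
  have hρα := posSemidef_matRpow hρ α
  have hσα := posSemidef_matRpow hσ (1 - α)
  refine (re_trace_mul_nonneg hρα hσα).lt_of_ne' fun h0 ↦ hρ0 ?_
  set S := matRpow σ ((1 - α) / 2)
  have hS : matRpow σ (1 - α) = S * Sᴴ := by
    rw [isHermitian_matRpow, matRpow_mul_matRpow hσ, add_halves]
  have hρS : matRpow ρ α * S = 0 := mul_eq_zero_of_re_trace_eq_zero hρα (by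
    rw [Matrix.mul_assoc, trace_mul_comm, Matrix.mul_assoc, ← hS, h0])
  have hSρ : S * matRpow ρ α = 0 := by
    simpa [(isHermitian_matRpow _ _).eq, S] using congrArg conjTranspose hρS
  refine mulVec_injective (funext fun w ↦ ?_)
  have hw : ρ *ᵥ (matRpow ρ α *ᵥ w) = 0 :=
    hker _ ((matRpow_mulVec_eq_zero_iff hσ _ _).1 (by rw [mulVec_mulVec, hSρ, zero_mulVec]))
  rw [← matRpow_mulVec_eq_zero_iff hρ α, mulVec_mulVec, matRpow_mul_matRpow hρ,
    matRpow_mulVec_eq_zero_iff hρ] at hw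
  rw [hw, zero_mulVec]

section DataProcessing

variable {m n : Type*} [Fintype m] [Fintype n] {ρ σ : Matrix n n ℂ} {ρ' σ' : Matrix m m ℂ}
  {Ψ : Matrix m m ℂ → Matrix n n ℂ}

/-- `Ψ` pulls test operators for the pair `(ρ', σ')` back to test operators for `(ρ, σ)` as the
adjoint of a channel mapping `(ρ, σ)` to `(ρ', σ')` does, the Kadison–Schwarz inequality being
required only in expectation: in the left state for `ρ` and in the right state for `σ`, where
`σ'` may also exceed the image of `σ`. -/
structure IsSchwarzPullback (ρ σ : Matrix n n ℂ) (ρ' σ' : Matrix m m ℂ)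
    (Ψ : Matrix m m ℂ → Matrix n n ℂ) : Prop where
  re_trace_mul : ∀ X, (ρ * Ψ X).trace.re = (ρ' * X).trace.re
  re_trace_mul_mul_conjTranspose_le :
    ∀ X, (Ψ X * ρ * (Ψ X)ᴴ).trace.re ≤ (X * ρ' * Xᴴ).trace.re
  re_trace_conjTranspose_mul_mul_le :
    ∀ X, ((Ψ X)ᴴ * σ * Ψ X).trace.re ≤ (Xᴴ * σ' * X).trace.re

namespace IsSchwarzPullback

lemma variationalForm_le (h : IsSchwarzPullback ρ σ ρ' σ' Ψ) {t : ℝ} (ht : 0 ≤ t)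
    (X : Matrix m m ℂ) : variationalForm ρ' σ' t X ≤ variationalForm ρ σ t (Ψ X) := by
  rw [variationalForm, variationalForm, h.re_trace_mul]
  gcongr ?_ - ?_ - t * ?_
  · exact h.re_trace_mul_mul_conjTranspose_le X
  · exact h.re_trace_conjTranspose_mul_mul_le X

lemma mulVec_eq_zero (h : IsSchwarzPullback ρ σ ρ' σ' Ψ) (hσ : σ.PosSemidef)
    (hρ' : ρ'.PosSemidef) (hker : ∀ v, σ *ᵥ v = 0 → ρ *ᵥ v = 0) {v : m → ℂ}
    (hv : σ' *ᵥ v = 0) : ρ' *ᵥ v = 0 := by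
  set P := vecMulVec v (star v)
  have hσ'P : σ' * P = 0 := by rw [mul_vecMulVec, hv, zero_vecMulVec]
  have hσΨ : σ * Ψ P = 0 := by
    refine mul_eq_zero_of_re_trace_eq_zero hσ (le_antisymm ?_
      (re_trace_nonneg (hσ.conjTranspose_mul_mul_same _)))
    simpa only [Matrix.mul_assoc, hσ'P, Matrix.mul_zero, trace_zero, Complex.zero_re] using
      h.re_trace_conjTranspose_mul_mul_le P
  have hρΨ : ρ * Ψ P = 0 := by
    ext i j
    exact congrFun (hker (fun k ↦ Ψ P k j) (funext fun i ↦ congrFun₂ hσΨ i j)) i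
  have h0 : 0 ≤ star v ⬝ᵥ ρ' *ᵥ v := hρ'.dotProduct_mulVec_nonneg v
  have hre : (star v ⬝ᵥ ρ' *ᵥ v).re = 0 := by
    rw [dotProduct_comm, ← trace_vecMulVec, ← mul_vecMulVec, ← h.re_trace_mul, hρΨ, trace_zero,
      Complex.zero_re]
  exact (hρ'.dotProduct_mulVec_zero_iff v).1 (Complex.ext hre (Complex.nonneg_iff.1 h0).2.symm)

variable [DecidableEq m] [DecidableEq n]

lemma resolventSum_le (h : IsSchwarzPullback ρ σ ρ' σ' Ψ) (hρ : ρ.PosSemidef)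
    (hσ : σ.PosSemidef) (hρ' : ρ'.PosSemidef) (hσ' : σ'.PosSemidef) {t : ℝ} (ht : 0 < t) :
    (overlapSum hρ'.1 hσ'.1 fun p q ↦ p ^ 2 / (p + t * q)) ≤
      overlapSum hρ.1 hσ.1 fun p q ↦ p ^ 2 / (p + t * q) := by
  obtain ⟨X, hX⟩ := (isGreatest_range_variationalForm hρ' hσ' ht).1
  rw [← hX]
  exact (h.variationalForm_le ht.le X).trans
    ((isGreatest_range_variationalForm hρ hσ ht).2 ⟨Ψ X, rfl⟩)

lemma re_trace_matRpow_mul_matRpow_le (h : IsSchwarzPullback ρ σ ρ' σ' Ψ)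
    (hρ : ρ.PosSemidef) (hσ : σ.PosSemidef) (hρ' : ρ'.PosSemidef) (hσ' : σ'.PosSemidef)
    (hker : ∀ v, σ *ᵥ v = 0 → ρ *ᵥ v = 0) {α : ℝ} (hα : α ∈ Set.Ioo (1 : ℝ) 2) :
    (matRpow ρ' α * matRpow σ' (1 - α)).trace.re ≤ (matRpow ρ α * matRpow σ (1 - α)).trace.re := by
  obtain ⟨hintegrable, heq⟩ := integral_rpow_mul_resolventSum hρ hσ hker hα
  obtain ⟨hintegrable', heq'⟩ := integral_rpow_mul_resolventSum hρ' hσ'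
    (fun v ↦ h.mulVec_eq_zero hσ hρ' hker) hα
  have hC := Real.integral_rpowIntegrand₀₁_one_pos (p := α - 1)
    ⟨sub_pos.2 hα.1, by linarith [hα.2]⟩
  refine le_of_mul_le_mul_left ?_ hC
  rw [← heq, ← heq']
  refine MeasureTheory.setIntegral_mono_on hintegrable' hintegrable measurableSet_Ioi fun t ht ↦ ?_
  exact mul_le_mul_of_nonneg_left (h.resolventSum_le hρ hσ hρ' hσ' ht)
    (Real.rpow_nonneg (le_of_lt ht) _)

lemma le_re_trace_matRpow_mul_matRpow (h : IsSchwarzPullback ρ σ ρ' σ' Ψ)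
    (hρ : ρ.PosSemidef) (hσ : σ.PosSemidef) (hρ' : ρ'.PosSemidef) (hσ' : σ'.PosSemidef)
    (htr : ρ'.trace = ρ.trace) {α : ℝ} (hα : α ∈ Set.Ioo (0 : ℝ) 1) :
    (matRpow ρ α * matRpow σ (1 - α)).trace.re ≤ (matRpow ρ' α * matRpow σ' (1 - α)).trace.re := by
  obtain ⟨hintegrable, heq⟩ := integral_rpow_mul_trace_sub_resolventSum hρ hσ hα
  obtain ⟨hintegrable', heq'⟩ := integral_rpow_mul_trace_sub_resolventSum hρ' hσ' hα
  refine le_of_mul_le_mul_left ?_ (Real.integral_rpowIntegrand₀₁_one_pos hα)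
  rw [← heq, ← heq']
  refine MeasureTheory.setIntegral_mono_on hintegrable hintegrable' measurableSet_Ioi fun t ht ↦ ?_
  refine mul_le_mul_of_nonneg_left ?_ (Real.rpow_nonneg (le_of_lt ht) _)
  rw [htr]
  exact sub_le_sub_left (h.resolventSum_le hρ hσ hρ' hσ' ht) _

lemma renyiDiv_le (h : IsSchwarzPullback ρ σ ρ' σ' Ψ) (hρ : ρ.PosSemidef) (hσ : σ.PosSemidef)
    (hρ' : ρ'.PosSemidef) (hσ' : σ'.PosSemidef) (htr : ρ'.trace = ρ.trace) (hρ0 : ρ ≠ 0)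
    (hker : ∀ v, σ *ᵥ v = 0 → ρ *ᵥ v = 0) {α : ℝ} (hα : α ∈ Set.Ioo (0 : ℝ) 2) (hα1 : α ≠ 1) :
    renyiDiv α ρ' σ' ≤ renyiDiv α ρ σ := by
  have hρ'0 : ρ' ≠ 0 := by
    rwa [Ne, ← hρ'.trace_eq_zero_iff, htr, hρ.trace_eq_zero_iff]
  rcases hα1.lt_or_gt with hlt | hgt
  · refine mul_le_mul_of_nonpos_left (Real.log_le_log ?_ ?_) (inv_nonpos.2 (by linarith))
    · exact re_trace_matRpow_mul_matRpow_pos hρ hσ hker hρ0 α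
    · exact h.le_re_trace_matRpow_mul_matRpow hρ hσ hρ' hσ' htr ⟨hα.1, hlt⟩
  · refine mul_le_mul_of_nonneg_left (Real.log_le_log ?_ ?_) (inv_nonneg.2 (by linarith))
    · exact re_trace_matRpow_mul_matRpow_pos hρ' hσ' (fun v ↦ h.mulVec_eq_zero hσ hρ' hker) hρ'0 α
    · exact h.re_trace_matRpow_mul_matRpow_le hρ hσ hρ' hσ' hker ⟨hgt, hα.2⟩

end IsSchwarzPullback

end DataProcessing

section PartialTrace

variable {A B C : Type*} [Fintype A] [Fintype C]

lemma posSemidef_trFstThird {W : Matrix (A × B × C) (A × B × C) ℂ} (hW : W.PosSemidef) :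
    (trFstThird W).PosSemidef := by
  have h : trFstThird W =
      ∑ a, ∑ c, W.submatrix (fun b ↦ (a, b, c)) (fun b ↦ (a, b, c)) := by
    ext
    simp [trFstThird, Matrix.sum_apply]
  rw [h]
  exact posSemidef_sum _ fun a _ ↦ posSemidef_sum _ fun c _ ↦ hW.submatrix _

variable [Fintype B]

lemma trace_trFstThird (W : Matrix (A × B × C) (A × B × C) ℂ) :
    (trFstThird W).trace = W.trace := by
  simp only [trace, trFstThird, diag_apply, of_apply, Fintype.sum_prod_type]
  exact Finset.sum_comm

/-- Operators on `B` acting on the middle factor of `A ⊗ B ⊗ C`. -/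
def actOnSecond (A B C : Type*) [Fintype A] [Fintype B] [Fintype C] [DecidableEq A]
    [DecidableEq C] : Matrix B B ℂ →⋆ₙₐ[ℂ] Matrix (A × B × C) (A × B × C) ℂ where
  toFun P := (1 : Matrix A A ℂ) ⊗ₖ (P ⊗ₖ (1 : Matrix C C ℂ))
  map_smul' k P := by rw [smul_kronecker, kronecker_smul]; rfl
  map_zero' := by rw [zero_kronecker, kronecker_zero]
  map_add' P Q := by rw [add_kronecker, kronecker_add]
  map_mul' P Q := by rw [← mul_kronecker_mul, ← mul_kronecker_mul, one_mul, one_mul]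
  map_star' P := by simp only [star_eq_conjTranspose, conjTranspose_kronecker, conjTranspose_one]

lemma actOnSecond_apply [DecidableEq A] [DecidableEq C] (P : Matrix B B ℂ) :
    actOnSecond A B C P = (1 : Matrix A A ℂ) ⊗ₖ (P ⊗ₖ (1 : Matrix C C ℂ)) := rfl

lemma trace_trFstThird_mul [DecidableEq A] [DecidableEq C]
    (W : Matrix (A × B × C) (A × B × C) ℂ) (P : Matrix B B ℂ) :
    (trFstThird W * P).trace = (W * actOnSecond A B C P).trace := by
  simp only [trace, diag_apply, mul_apply, trFstThird, of_apply, actOnSecond_apply,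
    kroneckerMap_apply, one_apply, Fintype.sum_prod_type, Finset.sum_mul, mul_ite, ite_mul,
    mul_one, mul_zero, one_mul, zero_mul, Finset.sum_ite_eq', Finset.mem_univ, if_true,
    Finset.sum_const_zero, Finset.sum_ite_irrel]
  refine (Finset.sum_congr rfl fun b _ ↦ Finset.sum_comm).trans (Finset.sum_comm.trans ?_)
  exact Finset.sum_congr rfl fun a _ ↦ Finset.sum_congr rfl fun b _ ↦ Finset.sum_comm

variable [DecidableEq B] [DecidableEq C]

lemma kronecker_one_mul_actOnSecond [DecidableEq A] (S : Matrix A A ℂ) (P : Matrix B B ℂ) :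
    (S ⊗ₖ (1 : Matrix (B × C) (B × C) ℂ)) * actOnSecond A B C P =
      actOnSecond A B C P * (S ⊗ₖ (1 : Matrix (B × C) (B × C) ℂ)) := by
  simp only [actOnSecond_apply, ← mul_kronecker_mul, Matrix.one_mul, Matrix.mul_one]

lemma trFstThird_kronecker_one_mul (S : Matrix A A ℂ) (W : Matrix (A × B × C) (A × B × C) ℂ) :
    trFstThird ((S ⊗ₖ (1 : Matrix (B × C) (B × C) ℂ)) * W) =
      trFst ((S ⊗ₖ (1 : Matrix B B ℂ)) * trThird W) := by
  ext b b'
  simp only [trFstThird, trFst, trThird, of_apply, mul_apply, kroneckerMap_apply, one_apply,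
    Fintype.sum_prod_type, mul_ite, ite_mul, mul_one, mul_zero, zero_mul,
    Finset.sum_ite_eq, Finset.mem_univ, if_true, Finset.sum_ite_irrel, Finset.sum_const_zero,
    Finset.mul_sum]
  exact Finset.sum_congr rfl fun _ _ ↦ Finset.sum_comm

lemma trFstThird_kronecker_one_mul_comm (S : Matrix A A ℂ)
    (W : Matrix (A × B × C) (A × B × C) ℂ) :
    trFstThird ((S ⊗ₖ (1 : Matrix (B × C) (B × C) ℂ)) * W) =
      trFstThird (W * (S ⊗ₖ (1 : Matrix (B × C) (B × C) ℂ))) := by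
  ext b b'
  simp only [trFstThird, of_apply, mul_apply, kroneckerMap_apply, one_apply,
    Fintype.sum_prod_type, mul_ite, ite_mul, mul_one, mul_zero, zero_mul,
    Finset.sum_ite_eq, Finset.sum_ite_eq', Finset.mem_univ, if_true]
  refine (Finset.sum_congr rfl fun _ _ ↦ Finset.sum_comm).trans (Finset.sum_comm.trans ?_)
  refine Finset.sum_congr rfl fun _ _ ↦ Finset.sum_comm.trans ?_
  exact Finset.sum_congr rfl fun _ _ ↦ Finset.sum_congr rfl fun _ _ ↦ mul_comm _ _

lemma posSemidef_trFstThird_kronecker_one_mul {S : Matrix A A ℂ} (hS : S.PosSemidef)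
    {W : Matrix (A × B × C) (A × B × C) ℂ} (hW : W.PosSemidef) :
    (trFstThird ((S ⊗ₖ (1 : Matrix (B × C) (B × C) ℂ)) * W)).PosSemidef := by
  obtain ⟨T, rfl⟩ := exists_conjTranspose_mul_self_eq hS
  have hT : (Tᴴ * T) ⊗ₖ (1 : Matrix (B × C) (B × C) ℂ) = (Tᴴ ⊗ₖ 1) * (T ⊗ₖ 1) := by
    rw [← mul_kronecker_mul, Matrix.one_mul]
  rw [hT, Matrix.mul_assoc, trFstThird_kronecker_one_mul_comm]
  refine posSemidef_trFstThird ?_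
  simpa only [conjTranspose_kronecker, conjTranspose_one] using
    hW.mul_mul_conjTranspose_same (T ⊗ₖ (1 : Matrix (B × C) (B × C) ℂ))

end PartialTrace

section Purification

variable {A B C D : Type*}

/-- For a square root `R` of `ρ = R * Rᴴ`, the columns of `R` are the components of a purification
of `ρ` along the purifying system `D`; here it is read as an operator from `C` to `A ⊗ B ⊗ D`. -/
def purification (R : Matrix (A × B × C) D ℂ) : Matrix (A × B × D) C ℂ :=
  of fun k c ↦ R (k.1, k.2.1, c) k.2.2

variable [Fintype C] [Fintype D]

lemma trThird_purification (R : Matrix (A × B × C) D ℂ) :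
    trThird (purification R * (purification R)ᴴ) = trThird (R * Rᴴ) := by
  ext p q
  simp only [trThird, of_apply, mul_apply, purification, conjTranspose_apply]
  exact Finset.sum_comm

variable [Fintype A] [Fintype B] [DecidableEq B] [DecidableEq C] [DecidableEq D]

lemma trFstSnd_kronecker_one_mul (S : Matrix A A ℂ) (R : Matrix (A × B × C) D ℂ) :
    trFstSnd ((S ⊗ₖ (1 : Matrix (B × C) (B × C) ℂ)) * (R * Rᴴ)) =
      ((purification R)ᴴ * (S ⊗ₖ (1 : Matrix (B × D) (B × D) ℂ)) * purification R)ᵀ := by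
  rw [Matrix.mul_assoc]
  ext c c'
  simp only [trFstSnd, of_apply, mul_apply, kroneckerMap_apply, one_apply, transpose_apply,
    conjTranspose_apply, purification, Fintype.sum_prod_type, mul_ite, ite_mul, mul_one, mul_zero,
    zero_mul, Finset.sum_ite_eq, Finset.mem_univ, if_true, Finset.sum_ite_irrel,
    Finset.sum_const_zero, Finset.mul_sum]
  refine Finset.sum_congr rfl fun _ _ ↦ Finset.sum_congr rfl fun _ _ ↦ Finset.sum_comm.trans ?_
  exact Finset.sum_congr rfl fun _ _ ↦ Finset.sum_congr rfl fun _ _ ↦ by ring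

end Purification

section Measurement

lemma IsSchwarzPullback.isometry_conj {m n l : Type*} [Fintype m] [Fintype n] [Fintype l]
    [DecidableEq n] {τ : Matrix n n ℂ} {σ : Matrix l l ℂ} {ρ' σ' : Matrix m m ℂ}
    {Φ : Matrix m m ℂ → Matrix n n ℂ} {V : Matrix l n ℂ} (hV : Vᴴ * V = 1)
    (h : IsSchwarzPullback τ (Vᴴ * σ * V) ρ' σ' Φ) :
    IsSchwarzPullback (V * τ * Vᴴ) σ ρ' σ' fun Z ↦ V * Φ Z * Vᴴ := by
  have hcancel (T : Matrix n l ℂ) : Vᴴ * (V * T) = T := by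
    rw [← Matrix.mul_assoc, hV, Matrix.one_mul]
  refine ⟨fun Z ↦ ?_, fun Z ↦ ?_, fun Z ↦ ?_⟩
  · rw [← h.re_trace_mul, trace_mul_comm]
    simp only [Matrix.mul_assoc, hcancel]
    rw [trace_mul_comm]
    simp only [Matrix.mul_assoc, hV, Matrix.mul_one]
    rw [trace_mul_comm]
  · refine le_of_eq_of_le ?_ (h.re_trace_mul_mul_conjTranspose_le Z)
    simp only [conjTranspose_mul, conjTranspose_conjTranspose, Matrix.mul_assoc, hcancel]
    rw [trace_mul_comm]
    simp only [Matrix.mul_assoc, hV, Matrix.mul_one]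
  · refine le_of_eq_of_le ?_ (h.re_trace_conjTranspose_mul_mul_le Z)
    simp only [conjTranspose_mul, conjTranspose_conjTranspose, Matrix.mul_assoc]
    rw [trace_mul_comm]
    simp only [Matrix.mul_assoc, hV, Matrix.mul_one]

variable {K B X Y : Type*} [Fintype K] [Fintype X]

lemma posSemidef_sum_conjTranspose_mul_mul_sub [DecidableEq K] {E : X → Matrix K K ℂ}
    (hE : ∀ x, (E x).PosSemidef) (hEsum : ∑ x, E x = 1) (Z : X → Matrix K K ℂ) :
    (∑ x, (Z x)ᴴ * E x * Z x - (∑ x, E x * Z x)ᴴ * ∑ x, E x * Z x).PosSemidef := by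
  set S := ∑ x, E x * Z x with hS
  have hSH : Sᴴ = ∑ x, (Z x)ᴴ * E x := by
    simp only [hS, conjTranspose_sum, conjTranspose_mul, (hE _).isHermitian.eq]
  have hvariance : ∑ x, (Z x)ᴴ * E x * Z x - Sᴴ * S = ∑ x, (Z x - S)ᴴ * E x * (Z x - S) := by
    have hexpand (x : X) : (Z x - S)ᴴ * E x * (Z x - S) =
        (Z x)ᴴ * E x * Z x - (Z x)ᴴ * E x * S - Sᴴ * (E x * Z x) + Sᴴ * E x * S := by
      rw [conjTranspose_sub]
      noncomm_ring
    simp only [hexpand, Finset.sum_add_distrib, Finset.sum_sub_distrib, ← Finset.sum_mul,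
      ← Finset.mul_sum, hEsum, ← hS, ← hSH, Matrix.mul_one, sub_add_cancel]
  rw [hvariance]
  exact posSemidef_sum _ fun x _ ↦ (hE x).conjTranspose_mul_mul_same _

variable [Fintype B] {J : Matrix B B ℂ →⋆ₙₐ[ℂ] Matrix K K ℂ}

lemma posSemidef_mul_map {T : Matrix K K ℂ} (hT : T.PosSemidef) (hTJ : ∀ P, T * J P = J P * T)
    {P : Matrix B B ℂ} (hP : P.PosSemidef) : (T * J P).PosSemidef := by
  obtain ⟨S, rfl⟩ := exists_conjTranspose_mul_self_eq hP
  have h := hT.conjTranspose_mul_mul_same (J S)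
  rwa [← star_eq_conjTranspose, ← map_star, ← hTJ, Matrix.mul_assoc, ← map_mul] at h

variable {E : X → Matrix K K ℂ}

/-- The Heisenberg-picture map of the measurement of the POVM `E` on `ℂ^K` which writes the outcome
into a register `X` and retains the subsystem `B`, whose operators act on `ℂ^K` through `J`. -/
noncomputable def povmPullback (E : X → Matrix K K ℂ) (J : Matrix B B ℂ →⋆ₙₐ[ℂ] Matrix K K ℂ)
    (Z : Matrix (X × B) (X × B) ℂ) : Matrix K K ℂ :=
  ∑ x, E x * J (registerBlock Z x)

lemma conjTranspose_povmPullback (hE : ∀ x, (E x).PosSemidef)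
    (hEJ : ∀ x P, E x * J P = J P * E x) (Z : Matrix (X × B) (X × B) ℂ) :
    (povmPullback E J Z)ᴴ = povmPullback E J Zᴴ := by
  simp only [povmPullback, conjTranspose_sum, conjTranspose_mul, (hE _).isHermitian.eq]
  refine Finset.sum_congr rfl fun x _ ↦ ?_
  rw [← star_eq_conjTranspose, ← map_star, hEJ]
  rfl

lemma re_trace_mul_povmPullback [DecidableEq X] {τ : Matrix K K ℂ} {r : X → Matrix B B ℂ}
    (hr : ∀ x P, (τ * (E x * J P)).trace.re = (r x * P).trace.re)
    (Z : Matrix (X × B) (X × B) ℂ) :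
    (τ * povmPullback E J Z).trace.re = (cqOperator r * Z).trace.re := by
  simp only [povmPullback, Matrix.mul_sum, trace_sum, Complex.re_sum, hr, trace_cqOperator_mul]

lemma povmPullback_kadisonSchwarz [DecidableEq K] (hE : ∀ x, (E x).PosSemidef)
    (hEsum : ∑ x, E x = 1) (hEJ : ∀ x P, E x * J P = J P * E x)
    (Z : Matrix (X × B) (X × B) ℂ) :
    (povmPullback E J (Zᴴ * Z) - (povmPullback E J Z)ᴴ * povmPullback E J Z).PosSemidef := by
  have hpinch := posSemidef_sum Finset.univ fun x _ ↦ posSemidef_mul_map (hE x) (hEJ x)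
    (posSemidef_registerBlock_conjTranspose_mul_self_sub Z x)
  have hpovm := posSemidef_sum_conjTranspose_mul_mul_sub hE hEsum
    fun x ↦ J (registerBlock Z x)
  simp only [← star_eq_conjTranspose, ← map_star, ← hEJ, Matrix.mul_assoc, ← map_mul] at hpovm
  simp only [map_sub, Matrix.mul_sub, Finset.sum_sub_distrib, ← star_eq_conjTranspose] at hpinch
  have h := hpinch.add hpovm
  rwa [sub_add_sub_cancel] at h

/- The overlap bound `F y * E x * (F y)ᴴ ≤ k` replaces the outcome `x` by a uniform register, at the
price of the factor `k`. -/
lemma re_trace_mul_povmPullback_le [DecidableEq K] {F w : Matrix K K ℂ}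
    (hEJ : ∀ x P, E x * J P = J P * E x) (hFJ : ∀ P, F * J P = J P * F) {k : ℝ}
    (hFE : ∀ x, (k • (1 : Matrix K K ℂ) - F * E x * Fᴴ).PosSemidef) (hw : w.PosSemidef)
    {Z : Matrix (X × B) (X × B) ℂ} (hZ : Z.PosSemidef) :
    (Fᴴ * w * F * povmPullback E J Z).trace.re ≤
      k * ∑ x, (w * J (registerBlock Z x)).trace.re := by
  have hFJ' (P : Matrix B B ℂ) : Fᴴ * J P = J P * Fᴴ := by
    have h := congrArg star (hFJ (star P)).symm
    rwa [star_mul, star_mul, ← map_star, star_star] at h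
  have hcomm (x : X) (P : Matrix B B ℂ) :
      (k • (1 : Matrix K K ℂ) - F * E x * Fᴴ) * J P =
        J P * (k • (1 : Matrix K K ℂ) - F * E x * Fᴴ) := by
    rw [Matrix.sub_mul, Matrix.mul_sub, Matrix.smul_mul, Matrix.mul_smul, Matrix.one_mul,
      Matrix.mul_one, Matrix.mul_assoc, hFJ', ← Matrix.mul_assoc, Matrix.mul_assoc F, hEJ,
      ← Matrix.mul_assoc F, hFJ]
    simp only [Matrix.mul_assoc]
  simp only [povmPullback, trace_sum, Complex.re_sum, Finset.mul_sum]
  refine Finset.sum_le_sum fun x _ ↦ ?_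
  have h := re_trace_mul_nonneg hw
    (posSemidef_mul_map (hFE x) (hcomm x) (hZ.submatrix (Prod.mk x)))
  rw [Matrix.sub_mul, Matrix.mul_sub, trace_sub, Complex.sub_re, sub_nonneg, Matrix.smul_mul,
    Matrix.one_mul, Matrix.mul_smul, trace_smul, Complex.smul_re, smul_eq_mul] at h
  refine le_of_eq_of_le ?_ h
  rw [Matrix.mul_assoc (F * E x), hFJ']
  simp only [Matrix.mul_assoc]
  rw [trace_mul_comm]
  simp only [Matrix.mul_assoc]
  rfl

theorem isSchwarzPullback_povmPullback [DecidableEq K] [DecidableEq X] [Fintype Y]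
    {F w : Y → Matrix K K ℂ} {τ : Matrix K K ℂ} {r : X → Matrix B B ℂ} {σ : Matrix B B ℂ} {k : ℝ}
    (hE : ∀ x, (E x).PosSemidef) (hEsum : ∑ x, E x = 1) (hEJ : ∀ x P, E x * J P = J P * E x)
    (hFJ : ∀ y P, F y * J P = J P * F y)
    (hFE : ∀ x y, (k • (1 : Matrix K K ℂ) - F y * E x * (F y)ᴴ).PosSemidef)
    (hτ : τ.PosSemidef) (hw : ∀ y, (w y).PosSemidef)
    (hr : ∀ x P, (τ * (E x * J P)).trace.re = (r x * P).trace.re)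
    (hσ : ∀ P, ((∑ y, w y) * J P).trace.re = (σ * P).trace.re) :
    IsSchwarzPullback τ (∑ y, (F y)ᴴ * w y * F y) (cqOperator r)
      (k • ((1 : Matrix X X ℂ) ⊗ₖ σ)) (povmPullback E J) where
  re_trace_mul := re_trace_mul_povmPullback hr
  re_trace_mul_mul_conjTranspose_le Z := by
    rw [Matrix.mul_assoc, trace_mul_comm, Matrix.mul_assoc, Matrix.mul_assoc Z, trace_mul_comm Z,
      Matrix.mul_assoc, ← re_trace_mul_povmPullback hr]
    exact re_trace_mul_le_re_trace_mul hτ (povmPullback_kadisonSchwarz hE hEsum hEJ Z)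
  re_trace_conjTranspose_mul_mul_le Z := by
    set G := ∑ y, (F y)ᴴ * w y * F y
    have hG : G.PosSemidef := posSemidef_sum _ fun y _ ↦ (hw y).conjTranspose_mul_mul_same _
    have hKS := povmPullback_kadisonSchwarz hE hEsum hEJ Zᴴ
    rw [← conjTranspose_povmPullback hE hEJ, conjTranspose_conjTranspose,
      conjTranspose_conjTranspose] at hKS
    calc ((povmPullback E J Z)ᴴ * G * povmPullback E J Z).trace.re
        = (G * (povmPullback E J Z * (povmPullback E J Z)ᴴ)).trace.re := by
          rw [Matrix.mul_assoc, trace_mul_comm, Matrix.mul_assoc]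
      _ ≤ (G * povmPullback E J (Z * Zᴴ)).trace.re := re_trace_mul_le_re_trace_mul hG hKS
      _ ≤ ∑ y, k * ∑ x, (w y * J (registerBlock (Z * Zᴴ) x)).trace.re := by
          rw [Matrix.sum_mul, trace_sum, Complex.re_sum]
          exact Finset.sum_le_sum fun y _ ↦ re_trace_mul_povmPullback_le hEJ (hFJ y)
            (fun x ↦ hFE x y) (hw y) (posSemidef_self_mul_conjTranspose Z)
      _ = k * ∑ x, (σ * registerBlock (Z * Zᴴ) x).trace.re := by
          simp only [← Finset.mul_sum, Finset.sum_comm (γ := Y), ← hσ, Matrix.sum_mul, trace_sum,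
            Complex.re_sum]
      _ = (Zᴴ * (k • ((1 : Matrix X X ℂ) ⊗ₖ σ)) * Z).trace.re := by
          rw [Matrix.mul_assoc, trace_mul_comm, Matrix.mul_assoc, Matrix.smul_mul, trace_smul,
            one_kronecker_eq_cqOperator, trace_cqOperator_mul, Complex.smul_re, smul_eq_mul,
            Complex.re_sum]

end Measurement

section Duality

lemma re_trace_matRpow_pos {n : Type*} [Fintype n] [DecidableEq n] {A : Matrix n n ℂ}
    (hA : A.PosSemidef) (hA0 : A ≠ 0) (t : ℝ) : 0 < (matRpow A t).trace.re := by
  refine re_trace_pos (posSemidef_matRpow hA t) fun h ↦ hA0 <| mulVec_injective <| funext fun v ↦ ?_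
  rw [zero_mulVec, ← matRpow_mulVec_eq_zero_iff hA t, h, zero_mulVec]

lemma re_trace_mul_matRpow_smul_matRpow {n : Type*} [Fintype n] [DecidableEq n] {Z : Matrix n n ℂ}
    (hZ : Z.PosSemidef) (hZ0 : Z ≠ 0) {α β : ℝ} (hαβ : α * β = 1) :
    (Z * matRpow ((matRpow Z β).trace.re⁻¹ • matRpow Z β) (1 - α)).trace.re =
      (matRpow Z β).trace.re ^ α := by
  have hQ := re_trace_matRpow_pos hZ hZ0 β
  have hexp : Z * matRpow Z (β * (1 - α)) = matRpow Z β := by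
    nth_rw 1 [← matRpow_one hZ.1]
    rw [matRpow_mul_matRpow hZ, show 1 + β * (1 - α) = β by linear_combination -hαβ]
  rw [matRpow_smul (inv_nonneg.2 hQ.le) (posSemidef_matRpow hZ β), matRpow_matRpow hZ,
    Matrix.mul_smul, hexp, trace_smul, Complex.smul_re, suppRpow_of_pos _ (inv_pos.2 hQ),
    smul_eq_mul, Real.inv_rpow hQ.le, ← Real.rpow_neg hQ.le, ← Real.rpow_add_one hQ.ne',
    show -(1 - α) + 1 = α by ring]

variable {K L C Y : Type*}

lemma isometry_registerStack [Fintype L] [Fintype Y] [DecidableEq K] {F : Y → Matrix L K ℂ}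
    (hF : ∑ y, (F y)ᴴ * F y = 1) : (registerStack F)ᴴ * registerStack F = 1 := by
  classical
  simpa only [cqOperator_one, Matrix.mul_one, hF] using
    conjTranspose_registerStack_mul_cqOperator_mul F fun _ ↦ 1

variable [Fintype K] [Fintype C] [DecidableEq K]

/-- For the instrument with Kraus operators `F y` applied to the purification `ψ`, the operator
whose power `β = α⁻¹`, once normalised, minimises the divergence `D_α` of the post-measurement
state; the minimum is dual to a sandwiched divergence of order `β`. -/
noncomputable def dualOperator [DecidableEq Y] (F : Y → Matrix L K ℂ) (ψ : Matrix K C ℂ) (α : ℝ) :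
    Matrix (Y × L) (Y × L) ℂ :=
  cqOperator fun y ↦ F y * matRpow (ψ * ψᴴ) α * (F y)ᴴ

lemma mul_matRpow_mul_conjTranspose [DecidableEq C] (G : Matrix L K ℂ) (ψ : Matrix K C ℂ) (α : ℝ) :
    G * matRpow (ψ * ψᴴ) α * Gᴴ =
      G * ψ * matRpow (ψᴴ * ψ) ((α - 1) / 2) * (G * ψ * matRpow (ψᴴ * ψ) ((α - 1) / 2))ᴴ := by
  have hsq := matRpow_mul_matRpow (posSemidef_conjTranspose_mul_self ψ) ((α - 1) / 2) ((α - 1) / 2)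
  rw [add_halves] at hsq
  rw [matRpow_mul_conjTranspose_self, ← hsq, conjTranspose_mul, conjTranspose_mul,
    (isHermitian_matRpow _ _).eq]
  simp only [Matrix.mul_assoc]

lemma posSemidef_mul_matRpow_mul_conjTranspose [Finite L] (G : Matrix L K ℂ) (ψ : Matrix K C ℂ)
    (α : ℝ) : (G * matRpow (ψ * ψᴴ) α * Gᴴ).PosSemidef :=
  (posSemidef_matRpow (posSemidef_self_mul_conjTranspose ψ) α).mul_mul_conjTranspose_same G

variable [DecidableEq Y] {F : Y → Matrix L K ℂ} {ψ : Matrix K C ℂ}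

lemma posSemidef_dualOperator [Finite L] [Finite Y] (F : Y → Matrix L K ℂ) (ψ : Matrix K C ℂ)
    (α : ℝ) : (dualOperator F ψ α).PosSemidef :=
  posSemidef_cqOperator fun y ↦ posSemidef_mul_matRpow_mul_conjTranspose (F y) ψ α

variable [Fintype L] [Fintype Y]

lemma dualOperator_mulVec_eq_zero {α : ℝ} {v : Y × L → ℂ} (hv : dualOperator F ψ α *ᵥ v = 0) :
    (registerStack F * (ψ * ψᴴ) * (registerStack F)ᴴ) *ᵥ v = 0 := by
  classical
  have hblock (y : Y) : ((ψ * ψᴴ) *ᵥ ((F y)ᴴ *ᵥ fun l ↦ v (y, l))) = 0 := by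
    have h := cqOperator_mulVec_eq_zero_iff.1 hv y
    rw [mul_matRpow_mul_conjTranspose, self_mul_conjTranspose_mulVec_eq_zero, conjTranspose_mul,
      conjTranspose_mul, (isHermitian_matRpow _ _).eq, ← mulVec_mulVec, ← mulVec_mulVec,
      matRpow_mulVec_eq_zero_iff (posSemidef_conjTranspose_mul_self ψ),
      conjTranspose_mul_self_mulVec_eq_zero, mulVec_mulVec] at h
    exact h
  have hsum : (registerStack F)ᴴ *ᵥ v = ∑ y, (F y)ᴴ *ᵥ fun l ↦ v (y, l) := by
    ext k
    simp [registerStack, mulVec, dotProduct, Fintype.sum_prod_type]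
  rw [Matrix.mul_assoc, ← mulVec_mulVec, ← mulVec_mulVec, hsum, mulVec_sum,
    Finset.sum_eq_zero fun y _ ↦ hblock y, mulVec_zero]

lemma dualOperator_ne_zero (hF : ∑ y, (F y)ᴴ * F y = 1) (hψ : ψ * ψᴴ ≠ 0) (α : ℝ) :
    dualOperator F ψ α ≠ 0 := by
  intro h
  have hV := isometry_registerStack hF
  have hzero : registerStack F * (ψ * ψᴴ) * (registerStack F)ᴴ = 0 :=
    Matrix.mulVec_injective <| funext fun v ↦ by
      rw [dualOperator_mulVec_eq_zero (by rw [h, zero_mulVec]), zero_mulVec]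
  apply hψ
  calc ψ * ψᴴ = (registerStack F)ᴴ * registerStack F * (ψ * ψᴴ) *
        ((registerStack F)ᴴ * registerStack F) := by rw [hV, Matrix.one_mul, Matrix.mul_one]
    _ = (registerStack F)ᴴ * (registerStack F * (ψ * ψᴴ) * (registerStack F)ᴴ) *
        registerStack F := by simp only [Matrix.mul_assoc]
    _ = 0 := by rw [hzero, Matrix.mul_zero, Matrix.zero_mul]

variable [DecidableEq L]

lemma trace_matRpow_isometry_conj_mul_cqOperator (hF : ∑ y, (F y)ᴴ * F y = 1) (ψ : Matrix K C ℂ)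
    (α : ℝ) (u : Y → Matrix L L ℂ) :
    (matRpow (registerStack F * (ψ * ψᴴ) * (registerStack F)ᴴ) α * cqOperator u).trace =
      (dualOperator F ψ α * cqOperator u).trace := by
  rw [matRpow_isometry_conj (isometry_registerStack hF) (posSemidef_self_mul_conjTranspose ψ),
    Matrix.mul_assoc, trace_mul_comm, ← Matrix.mul_assoc,
    conjTranspose_registerStack_mul_cqOperator_mul, dualOperator, cqOperator_mul_cqOperator,
    trace_cqOperator, Matrix.sum_mul, trace_sum]
  refine Finset.sum_congr rfl fun y _ ↦ ?_
  rw [trace_mul_comm _ (u y), Matrix.mul_assoc, Matrix.mul_assoc, trace_mul_comm]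
  simp only [Matrix.mul_assoc]

variable [DecidableEq C]

lemma trace_matRpow_dualOperator (F : Y → Matrix L K ℂ) (ψ : Matrix K C ℂ) (α β : ℝ) :
    (matRpow (dualOperator F ψ α) β).trace =
      (matRpow (matRpow ((1 : Matrix Y Y ℂ) ⊗ₖ (ψᴴ * ψ)) ((α - 1) / 2) *
        cqOperator (fun y ↦ ψᴴ * ((F y)ᴴ * F y) * ψ) *
        matRpow ((1 : Matrix Y Y ℂ) ⊗ₖ (ψᴴ * ψ)) ((α - 1) / 2)) β).trace := by
  have hS := isHermitian_matRpow (ψᴴ * ψ) ((α - 1) / 2)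
  have hψ := posSemidef_conjTranspose_mul_self ψ
  have hfactor (y : Y) : matRpow (ψᴴ * ψ) ((α - 1) / 2) * (ψᴴ * ((F y)ᴴ * F y) * ψ) *
      matRpow (ψᴴ * ψ) ((α - 1) / 2) = (F y * ψ * matRpow (ψᴴ * ψ) ((α - 1) / 2))ᴴ *
        (F y * ψ * matRpow (ψᴴ * ψ) ((α - 1) / 2)) := by
    simp only [conjTranspose_mul, hS.eq, Matrix.mul_assoc]
  rw [one_kronecker_eq_cqOperator, matRpow_cqOperator fun _ ↦ hψ.1, cqOperator_mul_cqOperator,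
    cqOperator_mul_cqOperator, dualOperator, matRpow_cqOperator, matRpow_cqOperator,
    trace_cqOperator, trace_cqOperator]
  · refine Finset.sum_congr rfl fun y _ ↦ ?_
    rw [mul_matRpow_mul_conjTranspose, hfactor, trace_matRpow_mul_conjTranspose_self]
  · exact fun y ↦ hfactor y ▸ isHermitian_conjTranspose_mul_self _
  · exact fun y ↦ (posSemidef_mul_matRpow_mul_conjTranspose (F y) ψ α).1

lemma sandwichedRenyiDiv_eq_log_trace_dualOperator {α β : ℝ} (hαβ : α * β = 1)
    (F : Y → Matrix L K ℂ) (ψ : Matrix K C ℂ) :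
    sandwichedRenyiDiv β (cqOperator fun y ↦ ψᴴ * ((F y)ᴴ * F y) * ψ)
        ((1 : Matrix Y Y ℂ) ⊗ₖ (ψᴴ * ψ)) =
      (β - 1)⁻¹ * Real.log (matRpow (dualOperator F ψ α) β).trace.re := by
  have hexp : (1 - β) / (2 * β) = (α - 1) / 2 := by
    have hβ : β ≠ 0 := right_ne_zero_of_mul_eq_one hαβ
    field_simp
    linear_combination -hαβ
  rw [sandwichedRenyiDiv, hexp, trace_matRpow_dualOperator]

theorem exists_cqOperator_renyiDiv_eq_neg_sandwichedRenyiDiv (hF : ∑ y, (F y)ᴴ * F y = 1)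
    (hψ : ψ * ψᴴ ≠ 0) {α β : ℝ} (hαβ : α * β = 1) :
    ∃ w : Y → Matrix L L ℂ, (∀ y, (w y).PosSemidef) ∧ (∑ y, w y).trace = 1 ∧
      (∀ v, cqOperator w *ᵥ v = 0 →
        (registerStack F * (ψ * ψᴴ) * (registerStack F)ᴴ) *ᵥ v = 0) ∧
      renyiDiv α (registerStack F * (ψ * ψᴴ) * (registerStack F)ᴴ) (cqOperator w) =
        -sandwichedRenyiDiv β (cqOperator fun y ↦ ψᴴ * ((F y)ᴴ * F y) * ψ)
          ((1 : Matrix Y Y ℂ) ⊗ₖ (ψᴴ * ψ)) := by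
  set Z := dualOperator F ψ α with hZdef
  set Q := (matRpow Z β).trace.re with hQdef
  have hZ : Z.PosSemidef := posSemidef_dualOperator F ψ α
  have hZ0 : Z ≠ 0 := dualOperator_ne_zero hF hψ α
  have hQ : 0 < Q := re_trace_matRpow_pos hZ hZ0 β
  have hblock (y : Y) := posSemidef_mul_matRpow_mul_conjTranspose (F y) ψ α
  set w : Y → Matrix L L ℂ := fun y ↦ Q⁻¹ • matRpow (F y * matRpow (ψ * ψᴴ) α * (F y)ᴴ) β
  have hw : cqOperator w = Q⁻¹ • matRpow Z β := by
    rw [hZdef, dualOperator, matRpow_cqOperator fun y ↦ (hblock y).1, cqOperator_smul]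
  have hw_psd (y : Y) : (w y).PosSemidef :=
    (posSemidef_matRpow (hblock y) β).smul (inv_nonneg.2 hQ.le)
  refine ⟨w, hw_psd, ?_, ?_, ?_⟩
  · rw [trace_sum, ← trace_cqOperator, hw, trace_smul,
      ← ofReal_re_trace (posSemidef_matRpow hZ β), ← hQdef, Complex.real_smul,
      ← Complex.ofReal_mul, inv_mul_cancel₀ hQ.ne', Complex.ofReal_one]
  · intro v hv
    rw [hw, smul_mulVec, smul_eq_zero_iff_right (inv_ne_zero hQ.ne'),
      matRpow_mulVec_eq_zero_iff hZ] at hv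
    exact dualOperator_mulVec_eq_zero hv
  · have hpow : matRpow (cqOperator w) (1 - α) = cqOperator fun y ↦ matRpow (w y) (1 - α) :=
      matRpow_cqOperator (fun y ↦ (hw_psd y).1) _
    rw [renyiDiv, hpow, trace_matRpow_isometry_conj_mul_cqOperator hF, ← hpow, hw,
      re_trace_mul_matRpow_smul_matRpow hZ hZ0 hαβ, Real.log_rpow hQ,
      sandwichedRenyiDiv_eq_log_trace_dualOperator hαβ, ← hQdef]
    have hβ : β - 1 = -(α⁻¹ * (α - 1)) := by
      rw [mul_sub, inv_mul_cancel₀ (left_ne_zero_of_mul_eq_one hαβ),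
        ← eq_inv_of_mul_eq_one_right hαβ]
      ring
    rw [hβ, inv_neg, mul_inv, inv_inv]
    ring

end Duality

section ConditionalEntropy

variable {n : Type*} [Fintype n] [DecidableEq n] {ρ σ : Matrix n n ℂ} {α : ℝ}

lemma isSchwarzPullback_one (h : (1 - σ).PosSemidef) : IsSchwarzPullback ρ σ ρ 1 id where
  re_trace_mul _ := rfl
  re_trace_mul_mul_conjTranspose_le _ := le_rfl
  re_trace_conjTranspose_mul_mul_le Z := by
    have hZ := re_trace_nonneg (h.conjTranspose_mul_mul_same Z)
    rwa [Matrix.mul_sub, Matrix.sub_mul, trace_sub, Complex.sub_re, sub_nonneg] at hZ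

open scoped MatrixOrder in
lemma posSemidef_one_sub_of_trace_eq_one (hσ : σ.PosSemidef) (htr : σ.trace = 1) :
    (1 - σ).PosSemidef := by
  have hsum : ∑ j, hσ.1.eigenvalues j = 1 := by
    simpa using congrArg Complex.re (hσ.1.trace_eq_sum_eigenvalues.symm.trans htr)
  refine Matrix.le_iff.1 (CFC.le_one (R := ℝ) (fun x hx ↦ ?_) hσ.1.isSelfAdjoint)
  obtain ⟨i, rfl⟩ := hσ.1.spectrum_real_eq_range_eigenvalues ▸ hx
  exact hsum ▸ Finset.single_le_sum (fun j _ ↦ hσ.eigenvalues_nonneg j) (Finset.mem_univ i)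

lemma renyiDiv_smul_right (hρ : ρ.PosSemidef) (hσ : σ.PosSemidef)
    (hker : ∀ v, σ *ᵥ v = 0 → ρ *ᵥ v = 0) (hρ0 : ρ ≠ 0) {k : ℝ} (hk : 0 < k) (hα : α ≠ 1) :
    renyiDiv α ρ (k • σ) = renyiDiv α ρ σ - Real.log k := by
  have hpos := re_trace_matRpow_mul_matRpow_pos hρ hσ hker hρ0 α
  have hα' : α - 1 ≠ 0 := sub_ne_zero.2 hα
  rw [renyiDiv, renyiDiv, matRpow_smul hk.le hσ, Matrix.mul_smul, trace_smul, Complex.smul_re,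
    smul_eq_mul, suppRpow_of_pos _ hk, Real.log_mul (Real.rpow_pos_of_pos hk _).ne' hpos.ne',
    Real.log_rpow hk]
  field_simp
  ring

lemma sandwichedRenyiDiv_transpose (hρ : ρ.IsHermitian) (hσ : σ.IsHermitian) (β : ℝ) :
    sandwichedRenyiDiv β ρᵀ σᵀ = sandwichedRenyiDiv β ρ σ := by
  have hS := isHermitian_matRpow σ ((1 - β) / (2 * β))
  have hherm := isHermitian_mul_mul_conjTranspose (matRpow σ ((1 - β) / (2 * β))) hρ
  rw [hS.eq] at hherm
  rw [sandwichedRenyiDiv, sandwichedRenyiDiv, ← transpose_matRpow hσ, Matrix.mul_assoc,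
    ← transpose_mul, ← transpose_mul, ← transpose_matRpow hherm, trace_transpose]

variable {X B : Type*} [Fintype X] [DecidableEq X] [Fintype B] [DecidableEq B]
  {r : X → Matrix B B ℂ}

lemma bddAbove_neg_renyiDiv_cqOperator (hr : ∀ x, (r x).PosSemidef) (hr0 : cqOperator r ≠ 0)
    (hα : α ∈ Set.Ioo (0 : ℝ) 2) (hα1 : α ≠ 1) :
    BddAbove {x : ℝ | ∃ σ : Matrix B B ℂ, σ.PosSemidef ∧ σ.trace = 1 ∧
      (1 < α → LinearMap.ker σ.mulVecLin ≤ LinearMap.ker (trFst (cqOperator r)).mulVecLin) ∧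
      x = -renyiDiv α (cqOperator r) ((1 : Matrix X X ℂ) ⊗ₖ σ)} := by
  have hcq := posSemidef_cqOperator hr
  have hone : (1 : Matrix (X × B) (X × B) ℂ).PosSemidef := PosSemidef.one
  have hpull {σ : Matrix B B ℂ} (hσ : σ.PosSemidef) (htr : σ.trace = 1) :
      IsSchwarzPullback (cqOperator r) ((1 : Matrix X X ℂ) ⊗ₖ σ) (cqOperator r) 1 id := by
    refine isSchwarzPullback_one ?_
    have h : 1 - (1 : Matrix X X ℂ) ⊗ₖ σ = (1 : Matrix X X ℂ) ⊗ₖ (1 - σ) := by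
      rw [sub_eq_iff_eq_add, ← kronecker_add, sub_add_cancel, one_kronecker_one]
    rw [h]
    exact PosSemidef.one.kronecker (posSemidef_one_sub_of_trace_eq_one hσ htr)
  rcases hα1.lt_or_gt with hlt | hgt
  · refine ⟨(1 - α)⁻¹ * (matRpow (cqOperator r) α * matRpow 1 (1 - α)).trace.re, ?_⟩
    rintro _ ⟨σ, hσ, htr, -, rfl⟩
    have hσ' : ((1 : Matrix X X ℂ) ⊗ₖ σ).PosSemidef := PosSemidef.one.kronecker hσ
    rw [renyiDiv, ← neg_mul, ← inv_neg, neg_sub]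
    refine mul_le_mul_of_nonneg_left ((Real.log_le_self ?_).trans ?_) (by simpa using hlt.le)
    · exact re_trace_mul_nonneg (posSemidef_matRpow hcq _) (posSemidef_matRpow hσ' _)
    · exact (hpull hσ htr).le_re_trace_matRpow_mul_matRpow hcq hσ' hcq hone rfl ⟨hα.1, hlt⟩
  · refine ⟨-renyiDiv α (cqOperator r) 1, ?_⟩
    rintro _ ⟨σ, hσ, htr, hker, rfl⟩
    have hker' (w) (hw : σ *ᵥ w = 0) : trFst (cqOperator r) *ᵥ w = 0 := hker hgt hw
    exact neg_le_neg ((hpull hσ htr).renyiDiv_le hcq (PosSemidef.one.kronecker hσ) hcq hone rfl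
      hr0 (fun v ↦ mulVec_eq_zero_of_trFst_cqOperator hr hker') hα hα1)

lemma neg_renyiDiv_le_condRenyiUp (hr : ∀ x, (r x).PosSemidef) (hr0 : cqOperator r ≠ 0)
    (hα : α ∈ Set.Ioo (0 : ℝ) 2) (hα1 : α ≠ 1) {σ : Matrix B B ℂ} (hσ : σ.PosSemidef)
    (htr : σ.trace = 1) (hker : ∀ v, ((1 : Matrix X X ℂ) ⊗ₖ σ) *ᵥ v = 0 → cqOperator r *ᵥ v = 0) :
    -renyiDiv α (cqOperator r) ((1 : Matrix X X ℂ) ⊗ₖ σ) ≤ condRenyiUp α (cqOperator r) :=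
  le_csSup (bddAbove_neg_renyiDiv_cqOperator hr hr0 hα hα1)
    ⟨σ, hσ, htr, fun _ _ hw ↦ trFst_cqOperator_mulVec_eq_zero hker hw, rfl⟩

end ConditionalEntropy

section MeasuredStates

lemma sum_kronecker {l m X : Type*} [Fintype X] (M : X → Matrix l l ℂ) (P : Matrix m m ℂ) :
    ∑ x, M x ⊗ₖ P = (∑ x, M x) ⊗ₖ P := by
  ext
  simp [Matrix.sum_apply, Finset.sum_mul]

variable {A B C X : Type*} [Fintype A] [Fintype B] [DecidableEq B] [Fintype C] [DecidableEq C]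
  [DecidableEq X]

/-- The state `ρ_XB` of the outcome register `X` and the system `B` after the measurement of `A`
with the POVM `M`. -/
noncomputable def measuredSecond (M : X → Matrix A A ℂ) (ρ : Matrix (A × B × C) (A × B × C) ℂ) :
    Matrix (X × B) (X × B) ℂ :=
  cqOperator fun x ↦ trFstThird ((M x ⊗ₖ (1 : Matrix (B × C) (B × C) ℂ)) * ρ)

/-- The state `ρ_XC` of the outcome register `X` and the system `C` after the measurement of `A`
with the POVM `M`. -/
noncomputable def measuredThird (M : X → Matrix A A ℂ) (ρ : Matrix (A × B × C) (A × B × C) ℂ) :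
    Matrix (X × C) (X × C) ℂ :=
  cqOperator fun x ↦ trFstSnd ((M x ⊗ₖ (1 : Matrix (B × C) (B × C) ℂ)) * ρ)

lemma posSemidef_measuredSecond [Finite X] {M : X → Matrix A A ℂ} (hM : ∀ x, (M x).PosSemidef)
    {ρ : Matrix (A × B × C) (A × B × C) ℂ} (hρ : ρ.PosSemidef) :
    (measuredSecond M ρ).PosSemidef :=
  posSemidef_cqOperator fun x ↦ posSemidef_trFstThird_kronecker_one_mul (hM x) hρ

lemma trace_measuredSecond [DecidableEq A] [Fintype X] {M : X → Matrix A A ℂ}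
    (hM : ∑ x, M x = 1) (ρ : Matrix (A × B × C) (A × B × C) ℂ) :
    (measuredSecond M ρ).trace = ρ.trace := by
  simp only [measuredSecond, trace_cqOperator, trace_trFstThird, ← trace_sum, ← Matrix.sum_mul,
    sum_kronecker, hM, one_kronecker_one, Matrix.one_mul]

lemma measuredSecond_eq_zero_iff [DecidableEq A] [Fintype X] {M : X → Matrix A A ℂ}
    (hM : ∀ x, (M x).PosSemidef) (hMsum : ∑ x, M x = 1) {ρ : Matrix (A × B × C) (A × B × C) ℂ}
    (hρ : ρ.PosSemidef) : measuredSecond M ρ = 0 ↔ ρ = 0 := by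
  rw [← (posSemidef_measuredSecond hM hρ).trace_eq_zero_iff, trace_measuredSecond hMsum,
    hρ.trace_eq_zero_iff]

variable {D : Type*} [Fintype D] [DecidableEq D]

lemma measuredSecond_purification (M : X → Matrix A A ℂ) (R : Matrix (A × B × C) D ℂ) :
    measuredSecond M (purification R * (purification R)ᴴ) = measuredSecond M (R * Rᴴ) := by
  simp only [measuredSecond, trFstThird_kronecker_one_mul, trThird_purification]

lemma measuredThird_eq_transpose (M : X → Matrix A A ℂ) (R : Matrix (A × B × C) D ℂ) :
    measuredThird M (R * Rᴴ) = (cqOperator fun x ↦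
      (purification R)ᴴ * (M x ⊗ₖ (1 : Matrix (B × D) (B × D) ℂ)) * purification R)ᵀ := by
  ext ⟨x, c⟩ ⟨x', c'⟩
  simp only [measuredThird, trFstSnd_kronecker_one_mul, cqOperator, of_apply, transpose_apply]
  split_ifs with h h' h' <;> simp_all

variable [DecidableEq A]

lemma sandwichedRenyiDiv_measuredThird [Fintype X] {M : X → Matrix A A ℂ}
    (hM : ∀ x, (M x).PosSemidef) (hMsum : ∑ x, M x = 1) (R : Matrix (A × B × C) D ℂ) (β : ℝ) :
    sandwichedRenyiDiv β (measuredThird M (R * Rᴴ))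
        ((1 : Matrix X X ℂ) ⊗ₖ trFst (measuredThird M (R * Rᴴ))) =
      sandwichedRenyiDiv β
        (cqOperator fun x ↦
          (purification R)ᴴ * (M x ⊗ₖ (1 : Matrix (B × D) (B × D) ℂ)) * purification R)
        ((1 : Matrix X X ℂ) ⊗ₖ ((purification R)ᴴ * purification R)) := by
  set ψ := purification R
  have htr : trFst (measuredThird M (R * Rᴴ)) = (ψᴴ * ψ)ᵀ := by
    simp only [measuredThird, trFst_cqOperator, trFstSnd_kronecker_one_mul, ← transpose_sum,
      ← Matrix.sum_mul, ← Matrix.mul_sum, sum_kronecker, hMsum, one_kronecker_one,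
      Matrix.mul_one, ψ]
  have hblock (x : X) : (ψᴴ * (M x ⊗ₖ (1 : Matrix (B × D) (B × D) ℂ)) * ψ).PosSemidef :=
    ((hM x).kronecker PosSemidef.one).conjTranspose_mul_mul_same ψ
  have hψ : ((1 : Matrix X X ℂ) ⊗ₖ (ψᴴ * ψ)).PosSemidef :=
    PosSemidef.one.kronecker (posSemidef_conjTranspose_mul_self ψ)
  rw [htr, measuredThird_eq_transpose, ← sandwichedRenyiDiv_transpose
    (posSemidef_cqOperator hblock).1 hψ.1, ← kroneckerMap_transpose, transpose_one]

theorem isSchwarzPullback_measuredSecond {Y : Type*} [Fintype X] [Fintype Y] [DecidableEq Y]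
    {M : X → Matrix A A ℂ} {T : Y → Matrix A A ℂ} (hM : ∀ x, (M x).PosSemidef)
    (hMsum : ∑ x, M x = 1) (hT : ∑ y, (T y)ᴴ * T y = 1) {k : ℝ}
    (hk : ∀ x y, (k • (1 : Matrix A A ℂ) - T y * M x * (T y)ᴴ).PosSemidef)
    {τ : Matrix (A × B × C) (A × B × C) ℂ} (hτ : τ.PosSemidef)
    {w : Y → Matrix (A × B × C) (A × B × C) ℂ} (hw : ∀ y, (w y).PosSemidef) :
    ∃ Ψ, IsSchwarzPullback
      ((registerStack fun y ↦ T y ⊗ₖ (1 : Matrix (B × C) (B × C) ℂ)) * τ *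
        (registerStack fun y ↦ T y ⊗ₖ (1 : Matrix (B × C) (B × C) ℂ))ᴴ) (cqOperator w)
      (measuredSecond M τ) (k • ((1 : Matrix X X ℂ) ⊗ₖ trFstThird (∑ y, w y))) Ψ := by
  set F : Y → Matrix (A × B × C) (A × B × C) ℂ := fun y ↦ T y ⊗ₖ 1
  have hF (y : Y) (E : Matrix A A ℂ) : F y * (E ⊗ₖ 1) * (F y)ᴴ = (T y * E * (T y)ᴴ) ⊗ₖ 1 := by
    simp only [F, conjTranspose_kronecker, conjTranspose_one, ← mul_kronecker_mul, Matrix.one_mul]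
  have hFF : ∑ y, (F y)ᴴ * F y = 1 := by
    simp only [F, conjTranspose_kronecker, conjTranspose_one, ← mul_kronecker_mul, Matrix.one_mul,
      sum_kronecker, hT, one_kronecker_one]
  suffices h : IsSchwarzPullback τ ((registerStack F)ᴴ * cqOperator w * registerStack F)
      (measuredSecond M τ) (k • ((1 : Matrix X X ℂ) ⊗ₖ trFstThird (∑ y, w y)))
      (povmPullback (fun x ↦ M x ⊗ₖ 1) (actOnSecond A B C)) from
    ⟨_, h.isometry_conj (isometry_registerStack hFF)⟩
  rw [conjTranspose_registerStack_mul_cqOperator_mul]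
  refine isSchwarzPullback_povmPullback
    (fun x ↦ (hM x).kronecker PosSemidef.one) ?_ (fun x ↦ kronecker_one_mul_actOnSecond (M x))
    (fun y ↦ kronecker_one_mul_actOnSecond (T y)) (fun x y ↦ ?_) hτ hw (fun x P ↦ ?_) fun P ↦ ?_
  · rw [sum_kronecker, hMsum, one_kronecker_one]
  · have h : k • (1 : Matrix (A × B × C) (A × B × C) ℂ) - F y * (M x ⊗ₖ 1) * (F y)ᴴ =
        (k • (1 : Matrix A A ℂ) - T y * M x * (T y)ᴴ) ⊗ₖ 1 := by
      rw [hF, sub_eq_iff_eq_add, ← add_kronecker, sub_add_cancel, smul_kronecker,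
        one_kronecker_one]
    rw [h]
    exact (hk x y).kronecker PosSemidef.one
  · rw [trFstThird_kronecker_one_mul_comm, trace_trFstThird_mul, Matrix.mul_assoc]
  · rw [trace_trFstThird_mul]

end MeasuredStates

section OverlapConstant

open scoped Matrix.Norms.L2Operator MatrixOrder in
lemma posSemidef_smul_one_sub_iff {A : Type*} [Fintype A] [DecidableEq A] {T : Matrix A A ℂ}
    {c : ℝ} (hc : 0 ≤ c) : (c ^ 2 • (1 : Matrix A A ℂ) - Tᴴ * T).PosSemidef ↔
      ‖Matrix.toEuclideanCLM (𝕜 := ℂ) T‖ ≤ c := by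
  rw [Matrix.l2_opNorm_toEuclideanCLM, ← Matrix.le_iff, ← sq_le_sq₀ (norm_nonneg _) hc, sq ‖T‖,
    ← CStarRing.norm_star_mul_self, ← Algebra.algebraMap_eq_smul_one, star_eq_conjTranspose]
  exact (CStarAlgebra.norm_le_iff_le_algebraMap _ (sq_nonneg c)
    (posSemidef_conjTranspose_mul_self T).nonneg).symm

lemma posSemidef_one_sub_of_sum_eq_one {A X : Type*} [DecidableEq A] [Fintype X]
    {M : X → Matrix A A ℂ} (hM : ∀ x, (M x).PosSemidef) (hMsum : ∑ x, M x = 1) (x : X) :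
    (1 - M x).PosSemidef := by
  classical
  rw [← hMsum, ← Finset.sum_erase_eq_sub (Finset.mem_univ x)]
  exact posSemidef_sum _ fun x' _ ↦ hM x'

variable {A X Y : Type*} [Fintype A] [DecidableEq A]

/-- The overlap `max_{x,y} ‖√(M x) √(N y)‖` of two POVMs, measuring their incompatibility. -/
noncomputable def overlapConstant (M : X → Matrix A A ℂ) (N : Y → Matrix A A ℂ) : ℝ :=
  ⨆ x : X, ⨆ y : Y, ‖Matrix.toEuclideanCLM (𝕜 := ℂ) (matRpow (M x) (1 / 2) * matRpow (N y) (1 / 2))‖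

lemma overlapConstant_nonneg (M : X → Matrix A A ℂ) (N : Y → Matrix A A ℂ) :
    0 ≤ overlapConstant M N :=
  Real.iSup_nonneg fun _ ↦ Real.iSup_nonneg fun _ ↦ norm_nonneg _

lemma matRpow_half_mul_self {P : Matrix A A ℂ} (hP : P.PosSemidef) :
    matRpow P (1 / 2) * matRpow P (1 / 2) = P := by
  rw [matRpow_mul_matRpow hP, add_halves, matRpow_one hP.1]

lemma conjTranspose_mul_self_matRpow_half {P : Matrix A A ℂ} (hP : P.PosSemidef)
    (Q : Matrix A A ℂ) :
    (matRpow P (1 / 2) * matRpow Q (1 / 2))ᴴ * (matRpow P (1 / 2) * matRpow Q (1 / 2)) =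
      matRpow Q (1 / 2) * P * matRpow Q (1 / 2) := by
  conv_rhs => rw [← matRpow_half_mul_self hP]
  simp only [conjTranspose_mul, (isHermitian_matRpow _ _).eq, Matrix.mul_assoc]

variable {M : X → Matrix A A ℂ} {N : Y → Matrix A A ℂ}

lemma posSemidef_overlapConstant_sq_smul_one_sub [Finite X] [Finite Y]
    (hM : ∀ x, (M x).PosSemidef) (x : X) (y : Y) :
    (overlapConstant M N ^ 2 • (1 : Matrix A A ℂ) -
      matRpow (N y) (1 / 2) * M x * matRpow (N y) (1 / 2)).PosSemidef := by
  rw [← conjTranspose_mul_self_matRpow_half (hM x),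
    posSemidef_smul_one_sub_iff (overlapConstant_nonneg M N)]
  exact (le_ciSup (Set.finite_range _).bddAbove y).trans
    (le_ciSup (f := fun x ↦ ⨆ y, ‖Matrix.toEuclideanCLM (𝕜 := ℂ)
      (matRpow (M x) (1 / 2) * matRpow (N y) (1 / 2))‖) (Set.finite_range _).bddAbove x)

variable [Fintype X] [Fintype Y]

lemma overlapConstant_le_one (hM : ∀ x, (M x).PosSemidef) (hMsum : ∑ x, M x = 1)
    (hN : ∀ y, (N y).PosSemidef) (hNsum : ∑ y, N y = 1) : overlapConstant M N ≤ 1 := by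
  refine Real.iSup_le (fun x ↦ Real.iSup_le (fun y ↦ ?_) zero_le_one) zero_le_one
  have h := ((posSemidef_one_sub_of_sum_eq_one hM hMsum x).conjTranspose_mul_mul_same
    (matRpow (N y) (1 / 2))).add (posSemidef_one_sub_of_sum_eq_one hN hNsum y)
  rw [(isHermitian_matRpow _ _).eq, Matrix.mul_sub, Matrix.sub_mul, Matrix.mul_one,
    matRpow_half_mul_self (hN y), sub_add_sub_comm, add_comm (N y), add_sub_add_right_eq_sub] at h
  rwa [← posSemidef_smul_one_sub_iff zero_le_one, conjTranspose_mul_self_matRpow_half (hM x),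
    one_pow, one_smul]

lemma overlapConstant_pos [Nonempty A] (hM : ∀ x, (M x).PosSemidef) (hMsum : ∑ x, M x = 1)
    (hN : ∀ y, (N y).PosSemidef) (hNsum : ∑ y, N y = 1) : 0 < overlapConstant M N := by
  refine (overlapConstant_nonneg M N).lt_of_ne' fun h0 ↦ ?_
  have hsum : ∑ y, ∑ x, matRpow (N y) (1 / 2) * M x * matRpow (N y) (1 / 2) = 1 := by
    simp only [← Matrix.sum_mul, ← Matrix.mul_sum, hMsum, Matrix.mul_one,
      matRpow_half_mul_self (hN _), hNsum]
  have hneg : (-(1 : Matrix A A ℂ)).PosSemidef := by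
    rw [← hsum, ← Finset.sum_neg_distrib]
    refine posSemidef_sum _ fun y _ ↦ ?_
    rw [← Finset.sum_neg_distrib]
    refine posSemidef_sum _ fun x _ ↦ ?_
    simpa only [h0, zero_pow two_ne_zero, zero_smul, zero_sub] using
      posSemidef_overlapConstant_sq_smul_one_sub (N := N) hM x y
  obtain ⟨a⟩ := ‹Nonempty A›
  have h : (0 : ℝ) ≤ -1 := by simpa using (Complex.nonneg_iff.1 (hneg.diag_nonneg (i := a))).1
  linarith

end OverlapConstant

lemma log_one_div_le_log_one_div_sq {c : ℝ} (h0 : 0 ≤ c) (h1 : c ≤ 1) :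
    Real.log (1 / c) ≤ Real.log (1 / c ^ 2) := by
  rw [one_div, one_div, Real.log_inv, Real.log_inv, Real.log_pow]
  have h := Real.log_nonpos h0 h1
  push_cast
  linarith

lemma nonempty_left_of_ne_zero {A E : Type*} {ρ : Matrix (A × E) (A × E) ℂ} (hρ : ρ ≠ 0) :
    Nonempty A := by
  by_contra! h
  exact hρ (Subsingleton.elim _ _)

section UncertaintyRelation

variable {A B C X Y : Type*} [Fintype A] [DecidableEq A] [Fintype B] [DecidableEq B]
  [Fintype C] [DecidableEq C] [Fintype X] [DecidableEq X] [Fintype Y] [DecidableEq Y]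
  {α β k : ℝ}

theorem neg_log_le_condRenyiUp_sub_sandwichedRenyiDiv_of_pure {L : Type*}
    [Fintype L] [DecidableEq L] {ψ : Matrix (A × B × C) L ℂ} (hψ : ψ * ψᴴ ≠ 0)
    {M : X → Matrix A A ℂ}
    (hM : ∀ x, (M x).PosSemidef) (hMsum : ∑ x, M x = 1) {T : Y → Matrix A A ℂ}
    (hT : ∑ y, (T y)ᴴ * T y = 1) (hk : 0 < k)
    (hMT : ∀ x y, (k • (1 : Matrix A A ℂ) - T y * M x * (T y)ᴴ).PosSemidef)
    (hα : α ∈ Set.Ioo (0 : ℝ) 2) (hα1 : α ≠ 1) (hαβ : α * β = 1) :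
    -Real.log k ≤ condRenyiUp α (measuredSecond M (ψ * ψᴴ)) -
      sandwichedRenyiDiv β
        (cqOperator fun y ↦ ψᴴ * (((T y)ᴴ * T y) ⊗ₖ (1 : Matrix (B × C) (B × C) ℂ)) * ψ)
        ((1 : Matrix Y Y ℂ) ⊗ₖ (ψᴴ * ψ)) := by
  set F : Y → Matrix (A × B × C) (A × B × C) ℂ := fun y ↦ T y ⊗ₖ 1
  have hF (y : Y) : (F y)ᴴ * F y = ((T y)ᴴ * T y) ⊗ₖ 1 := by
    simp only [F, conjTranspose_kronecker, conjTranspose_one, ← mul_kronecker_mul, Matrix.one_mul]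
  have hFsum : ∑ y, (F y)ᴴ * F y = 1 := by
    simp only [hF, sum_kronecker, hT, one_kronecker_one]
  have hτ : (ψ * ψᴴ).PosSemidef := posSemidef_self_mul_conjTranspose ψ
  obtain ⟨w, hw, hwtr, hker, hdual⟩ :=
    exists_cqOperator_renyiDiv_eq_neg_sandwichedRenyiDiv hFsum hψ hαβ
  obtain ⟨Ψ, hΨ⟩ := isSchwarzPullback_measuredSecond hM hMsum hT hMT hτ hw
  set σ : Matrix B B ℂ := trFstThird (∑ y, w y)
  have hσ : σ.PosSemidef := posSemidef_trFstThird (posSemidef_sum _ fun y _ ↦ hw y)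
  have hIσ : ((1 : Matrix X X ℂ) ⊗ₖ σ).PosSemidef := PosSemidef.one.kronecker hσ
  have hXB := posSemidef_measuredSecond hM hτ
  have hV : (registerStack F * (ψ * ψᴴ) * (registerStack F)ᴴ).PosSemidef :=
    hτ.mul_mul_conjTranspose_same _
  have hVtr : (measuredSecond M (ψ * ψᴴ)).trace =
      (registerStack F * (ψ * ψᴴ) * (registerStack F)ᴴ).trace := by
    rw [trace_measuredSecond hMsum, trace_mul_cycle, isometry_registerStack hFsum, Matrix.one_mul]
  have hXB0 : measuredSecond M (ψ * ψᴴ) ≠ 0 := mt (measuredSecond_eq_zero_iff hM hMsum hτ).1 hψ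
  have hV0 : registerStack F * (ψ * ψᴴ) * (registerStack F)ᴴ ≠ 0 := by
    rwa [Ne, ← hV.trace_eq_zero_iff, ← hVtr, hXB.trace_eq_zero_iff]
  have hIσker (v) (hv : ((1 : Matrix X X ℂ) ⊗ₖ σ) *ᵥ v = 0) :
      measuredSecond M (ψ * ψᴴ) *ᵥ v = 0 :=
    hΨ.mulVec_eq_zero (posSemidef_cqOperator hw) hXB hker (by rw [smul_mulVec, hv, smul_zero])
  have hdiv := hΨ.renyiDiv_le hV (posSemidef_cqOperator hw) hXB (hIσ.smul hk.le) hVtr hV0 hker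
    hα hα1
  have hup := neg_renyiDiv_le_condRenyiUp
    (fun x ↦ posSemidef_trFstThird_kronecker_one_mul (hM x) hτ) hXB0 hα hα1 hσ
    ((trace_trFstThird _).trans hwtr) hIσker
  rw [renyiDiv_smul_right hXB hIσ hIσker hXB0 hk hα1, hdual] at hdiv
  simp only [measuredSecond, hF] at hdiv ⊢
  linarith

variable {ρ : Matrix (A × B × C) (A × B × C) ℂ} {M : X → Matrix A A ℂ} {N : Y → Matrix A A ℂ}

theorem neg_log_le_condRenyiUp_sub_sandwichedRenyiDiv (hρ : ρ.PosSemidef) (hρ0 : ρ ≠ 0)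
    (hM : ∀ x, (M x).PosSemidef) (hMsum : ∑ x, M x = 1)
    (hN : ∀ y, (N y).PosSemidef) (hNsum : ∑ y, N y = 1) (hk : 0 < k)
    (hMN : ∀ x y, (k • (1 : Matrix A A ℂ) -
      matRpow (N y) (1 / 2) * M x * matRpow (N y) (1 / 2)).PosSemidef)
    (hα : α ∈ Set.Ioo (0 : ℝ) 2) (hα1 : α ≠ 1) (hαβ : α * β = 1) :
    -Real.log k ≤ condRenyiUp α (measuredSecond M ρ) -
      sandwichedRenyiDiv β (measuredThird N ρ)
        ((1 : Matrix Y Y ℂ) ⊗ₖ trFst (measuredThird N ρ)) := by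
  obtain ⟨R, rfl⟩ : ∃ R : Matrix (A × B × C) (A × B × C) ℂ, R * Rᴴ = ρ := by
    obtain ⟨T, hT⟩ := exists_conjTranspose_mul_self_eq hρ
    exact ⟨Tᴴ, by rw [conjTranspose_conjTranspose, hT]⟩
  have hψ : purification R * (purification R)ᴴ ≠ 0 := by
    rwa [Ne, ← measuredSecond_eq_zero_iff hM hMsum (posSemidef_self_mul_conjTranspose _),
      measuredSecond_purification, measuredSecond_eq_zero_iff hM hMsum hρ]
  have hadj (y : Y) : (matRpow (N y) (1 / 2))ᴴ = matRpow (N y) (1 / 2) :=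
    isHermitian_matRpow _ _
  have h := neg_log_le_condRenyiUp_sub_sandwichedRenyiDiv_of_pure hψ hM hMsum
    (T := fun y ↦ matRpow (N y) (1 / 2)) (by simpa only [hadj, matRpow_half_mul_self (hN _)])
    hk (by simpa only [hadj]) hα hα1 hαβ
  simpa only [hadj, matRpow_half_mul_self (hN _), measuredSecond_purification,
    ← sandwichedRenyiDiv_measuredThird hN hNsum] using h

theorem uncertainty_up_sandwiched_down_general (hρ : ρ.PosSemidef) (hρ0 : ρ ≠ 0)
    (hM : ∀ x, (M x).PosSemidef) (hMsum : ∑ x, M x = 1)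
    (hN : ∀ y, (N y).PosSemidef) (hNsum : ∑ y, N y = 1)
    (hα : α ∈ Set.Ioo (0 : ℝ) 2) (hα1 : α ≠ 1) (hαβ : α * β = 1) :
    Real.log (1 / overlapConstant M N ^ 2) ≤ condRenyiUp α (measuredSecond M ρ) +
      -(sandwichedRenyiDiv β (measuredThird N ρ)
        ((1 : Matrix Y Y ℂ) ⊗ₖ trFst (measuredThird N ρ))) := by
  have : Nonempty A := nonempty_left_of_ne_zero hρ0
  have hc := overlapConstant_pos hM hMsum hN hNsum
  rw [one_div, Real.log_inv, ← sub_eq_add_neg]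
  exact neg_log_le_condRenyiUp_sub_sandwichedRenyiDiv hρ hρ0 hM hMsum hN hNsum (pow_pos hc 2)
    (posSemidef_overlapConstant_sq_smul_one_sub hM) hα hα1 hαβ

end UncertaintyRelation

theorem uncertainty_up_sandwiched_down {A B C X Y : Type*}
    [Fintype A] [DecidableEq A] [Fintype B] [DecidableEq B] [Fintype C] [DecidableEq C]
    [Fintype X] [DecidableEq X] [Nonempty X] [Fintype Y] [DecidableEq Y] [Nonempty Y]
    (ρ : Matrix (A × B × C) (A × B × C) ℂ) (hρ : ρ.PosSemidef) (hρ1 : ρ.trace = 1)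
    (M : X → Matrix A A ℂ) (N : Y → Matrix A A ℂ)
    (hM : ∀ x, (M x).PosSemidef) (hMsum : ∑ x, M x = 1)
    (hN : ∀ y, (N y).PosSemidef) (hNsum : ∑ y, N y = 1)
    (c : ℝ)
    (hc : c = ⨆ x : X, ⨆ y : Y, ‖Matrix.toEuclideanCLM (𝕜 := ℂ)
      (matRpow (M x) (1 / 2) * matRpow (N y) (1 / 2))‖)
    (α β : ℝ) (hα : α ∈ Set.Ioo (0 : ℝ) 2) (hβ : (1 : ℝ) / 2 < β)
    (hab : α * β = 1) (hα1 : α ≠ 1) :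
    let ρXB : Matrix (X × B) (X × B) ℂ := Matrix.of fun p p' =>
      if p.1 = p'.1 then
        trFstThird ((M p.1 ⊗ₖ (1 : Matrix (B × C) (B × C) ℂ)) * ρ) p.2 p'.2 else 0;
    let ρYC : Matrix (Y × C) (Y × C) ℂ := Matrix.of fun p p' =>
      if p.1 = p'.1 then
        trFstSnd ((N p.1 ⊗ₖ (1 : Matrix (B × C) (B × C) ℂ)) * ρ) p.2 p'.2 else 0;
    condRenyiUp α ρXB +
      -(sandwichedRenyiDiv β ρYC ((1 : Matrix Y Y ℂ) ⊗ₖ trFst ρYC)) ≥ Real.log (1 / c) := by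
  intro ρXB ρYC
  subst hc
  have hρ0 : ρ ≠ 0 := fun h ↦ by simp [h] at hρ1
  exact (log_one_div_le_log_one_div_sq (overlapConstant_nonneg M N)
    (overlapConstant_le_one hM hMsum hN hNsum)).trans
      (uncertainty_up_sandwiched_down_general hρ hρ0 hM hMsum hN hNsum hα hα1 hab)
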